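/- There exists a constant C > 0 such that for every integer n ≥ 2 there exist a lattice Λ ⊆ ℝⁿ and a radius r > 0 with Λ + B_rⁿ = ℝⁿ and vol(B_rⁿ)/det(Λ) ≤ C · n · (ln n)^β, where β := (1/2)·log₂(8πe/(3√3)). Equivalently, the optimal lattice covering density satisfies Θ_n ≤ C n (ln n)^β. -/

import Mathlib

open MeasureTheory Pointwise

noncomputable section

/-- The lattice generated by vectors `b`. -/
def latticeSet {n : ℕ} (b : Fin n → EuclideanSpace ℝ (Fin n)) :
    Set (EuclideanSpace ℝ (Fin n)) :=
  {x | ∃ c : Fin n → ℤ, x = ∑ i, (c i : ℝ) • b i}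

/-- The determinant of the lattice generated by `b`. -/
def latticeDet {n : ℕ} (b : Fin n → EuclideanSpace ℝ (Fin n)) : ℝ :=
  |(Matrix.of fun i j => b j i).det|

/-- Vertex set of the parallelepiped starting at `x` generated by `v`. -/
def vertexSet {n : ℕ} (x : EuclideanSpace ℝ (Fin n))
    (v : Fin n → EuclideanSpace ℝ (Fin n)) : Set (EuclideanSpace ℝ (Fin n)) :=
  {y | ∃ lam : Fin n → ℝ, (∀ i, lam i = 0 ∨ lam i = 1) ∧ y = x + ∑ i, lam i • v i}

/-- `P` is a fundamental parallelepiped of the lattice `Λ` with determinant `detΛ`. -/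
def IsFundParallelepiped {n : ℕ} (Λ : Set (EuclideanSpace ℝ (Fin n))) (detΛ : ℝ)
    (P : Set (EuclideanSpace ℝ (Fin n))) : Prop :=
  ∃ x v, LinearIndependent ℝ v ∧ P = convexHull ℝ (vertexSet x v) ∧
    vertexSet x v ⊆ Λ ∧ volume P = ENNReal.ofReal detΛ

/-- `(Λ(b), B_r)` is a lattice covering of `ℝⁿ`. -/
def IsLatticeCovering {n : ℕ} (b : Fin n → EuclideanSpace ℝ (Fin n)) (r : ℝ) : Prop :=
  LinearIndependent ℝ b ∧ latticeSet b + Metric.closedBall 0 r = Set.univ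

/-- `(Λ(b), B_r)` is a robust lattice covering of `ℝⁿ`. -/
def IsRobustCovering {n : ℕ} (b : Fin n → EuclideanSpace ℝ (Fin n)) (r : ℝ) : Prop :=
  IsLatticeCovering b r ∧
  ∀ c : EuclideanSpace ℝ (Fin n),
    ∃ P, IsFundParallelepiped (latticeSet b) (latticeDet b) P ∧
      P ⊆ Metric.closedBall c r

/-- The density of the lattice covering `(Λ(b), B_r)`. -/
def coveringDensity {n : ℕ} (b : Fin n → EuclideanSpace ℝ (Fin n)) (r : ℝ) : ℝ :=
  (volume (Metric.closedBall (0 : EuclideanSpace ℝ (Fin n)) r)).toReal / latticeDet b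

/-- `ν_d`, the volume of the ball of radius `√d` in `ℝ^d`. -/
def nu (d : ℕ) : ℝ :=
  (volume (Metric.closedBall (0 : EuclideanSpace ℝ (Fin d)) (Real.sqrt d))).toReal

set_option linter.unusedSectionVars false

section PartD
open Finset
variable {F : Type} [Field F] [Fintype F] [DecidableEq F] {ι : Type} [Fintype ι] [DecidableEq ι]
  {G : Type} [AddCommGroup G] [Module F G] [Fintype G] [DecidableEq G]

def evv (τ : ι → G) (v : ι → F) : G := ∑ i, v i • τ i

theorem evv_lin (τ : ι → G) : ∃ L : (ι → F) →ₗ[F] G, ∀ v, L v = evv τ v := by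
  refine ⟨∑ i, (LinearMap.proj i : (ι → F) →ₗ[F] F).smulRight (τ i), fun v => ?_⟩
  simp [evv]

/-- number of `τ` vanishing on independent vectors -/
theorem card_evv {κ : Type} [Fintype κ] [DecidableEq κ] (v : κ → ι → F) (hv : LinearIndependent F v) :
    (univ.filter fun τ : ι → G => ∀ t, evv τ (v t) = 0).card * Fintype.card G ^ Fintype.card κ
      = Fintype.card G ^ Fintype.card ι := by
  let Φ : (ι → G) →+ (κ → G) :=
    { toFun := fun τ t => evv τ (v t)
      map_zero' := by ext t; simp [evv]
      map_add' := by intro a b; ext t; simp [evv, Finset.sum_add_distrib] }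
  have hsurj : Function.Surjective Φ := by
    intro y
    obtain ⟨g, hg⟩ := LinearMap.exists_leftInverse_of_injective (Fintype.linearCombination F v)
      (LinearMap.ker_eq_bot.2 (linearIndependent_iff_injective_fintypeLinearCombination.1 hv))
    have hg' : ∀ t, g (v t) = Pi.single t 1 := by
      intro t
      have := LinearMap.congr_fun hg (Pi.single t 1)
      simpa [Fintype.linearCombination_apply_single] using this
    refine ⟨fun i => ∑ u, g (Pi.single i 1) u • y u, ?_⟩
    ext t
    have e1 : v t = ∑ i, v t i • (Pi.single i (1:F) : ι → F) := by
      ext j; simp [Finset.sum_apply, Pi.single_apply]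
    have e2 : ∀ u, g (v t) u = ∑ i, v t i * g (Pi.single i 1) u := by
      intro u
      conv_lhs => rw [e1]
      rw [map_sum]; simp
    change evv _ (v t) = y t
    simp only [evv, Finset.smul_sum, smul_smul]
    rw [Finset.sum_comm]
    simp only [← Finset.sum_smul, ← e2, hg']
    simp [Pi.single_apply]
  have hf : ∀ y : κ → G, (univ.filter fun τ : ι → G => Φ τ = y).card
      = (univ.filter fun τ : ι → G => Φ τ = 0).card := by
    intro y
    obtain ⟨τ0, h0⟩ := hsurj y
    symm
    apply Finset.card_bij (fun τ _ => τ + τ0)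
    · intro a ha; simp at ha ⊢; simp [ha, h0]
    · intro a _ b _ h; exact add_right_cancel h
    · intro b hb; refine ⟨b - τ0, ?_, by simp⟩; simp at hb ⊢; simp [hb, h0]
  have hsum := Finset.card_eq_sum_card_fiberwise (f := Φ) (s := univ) (t := univ) (by intro x _; simp)
  simp only [hf, Finset.sum_const, Finset.card_univ, Fintype.card_fun, smul_eq_mul] at hsum
  have : (univ.filter fun τ : ι → G => ∀ t, evv τ (v t) = 0) = (univ.filter fun τ : ι → G => Φ τ = 0) := by
    ext τ; simp only [mem_filter, mem_univ, true_and]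
    constructor
    · intro h; ext t; exact h t
    · intro h t; exact congrFun h t
  rw [this, mul_comm, hsum]

def Ind (J : Finset (ι → F)) : Prop := LinearIndepOn F id (J : Set (ι → F))
def Spn (J : Finset (ι → F)) (u : ι → F) : Prop := u ∈ Submodule.span F (J : Set (ι → F))

theorem card_evv_set (J : Finset (ι → F)) (hJ : Ind J) :
    ((univ.filter fun τ : ι → G => ∀ t ∈ J, evv τ t = 0).card : ℝ) * (Fintype.card G : ℝ) ^ J.card
      = (Fintype.card G : ℝ) ^ Fintype.card ι := by
  have := card_evv (G := G) (fun x : J => (x : ι → F)) hJ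
  rw [Fintype.card_coe] at this
  rw [← Nat.cast_pow, ← Nat.cast_pow, ← this]
  push_cast
  congr 3
  ext τ; simp

theorem evv_span (τ : ι → G) (J : Finset (ι → F)) (u : ι → F) (hu : Spn J u) (h : ∀ t ∈ J, evv τ t = 0) :
    evv τ u = 0 := by
  obtain ⟨L, hL⟩ := evv_lin (F := F) τ
  have : Submodule.span F (J : Set (ι → F)) ≤ LinearMap.ker L := by
    rw [Submodule.span_le]; intro x hx; simp [hL, h x hx]
  have := this hu
  rw [← hL]; exact this

open Classical in
theorem alt_sum_nonneg (a H : ℕ) (ha : a ≠ 0) (hH : Even H) :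
    0 ≤ ∑ h ∈ range (H+1), (-1:ℝ)^h * (a.choose h : ℝ) := by
  have := Int.alternating_sum_range_choose_eq_choose (n := a - 1) (m := H)
  rw [Nat.sub_add_cancel (Nat.pos_of_ne_zero ha)] at this
  have h2 : (∑ h ∈ range (H+1), (-1:ℝ)^h * (a.choose h : ℝ)) = ((-1)^H * ((a-1).choose H : ℤ) : ℤ) := by
    rw [← this]; push_cast; rfl
  rw [h2, hH.neg_one_pow]; positivity

open Classical in
theorem pointwise (A : Finset (ι → F)) (H : ℕ) (hH : Even H) :
    (if A = ∅ then (1:ℝ) else 0) ≤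
      ∑ h ∈ range (H+1), (-1:ℝ)^h * ((A.powersetCard h).filter Ind).card
      + ∑ l ∈ range (2*H+1), (2:ℝ)^l *
        (((A.powersetCard l) ×ˢ A).filter fun p => Ind p.1 ∧ p.2 ∉ p.1 ∧ Spn p.1 p.2).card := by
  have hnn : 0 ≤ ∑ l ∈ range (2*H+1), (2:ℝ)^l *
        (((A.powersetCard l) ×ˢ A).filter fun p => Ind p.1 ∧ p.2 ∉ p.1 ∧ Spn p.1 p.2).card := by
    positivity
  by_cases hbad : ∃ J ⊆ A, J.card ≤ H ∧ ¬ Ind J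
  · obtain ⟨J, hJA, hJH, hJ⟩ := hbad
    have hA : A ≠ ∅ := by
      rintro rfl
      have : J = ∅ := Finset.subset_empty.1 hJA
      subst this
      exact hJ (by simp [Ind])
    rw [if_neg hA]
    have key : ∀ I ⊆ A, I.card ≤ H → Ind I → ∃ J' u, I ⊆ J' ∧ J' ⊆ A ∧ J'.card ≤ 2*H ∧ Ind J' ∧ u ∈ A ∧ u ∉ J' ∧ Spn J' u := by
      intro I hIA hIH hI
      have hne : (((I ∪ J).powerset).filter fun K => I ⊆ K ∧ Ind K).Nonempty :=
        ⟨I, Finset.mem_filter.2 ⟨Finset.mem_powerset.2 Finset.subset_union_left, Finset.Subset.refl _, hI⟩⟩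
      obtain ⟨K, hK, hmax⟩ := Finset.exists_max_image _ Finset.card hne
      simp only [mem_filter, mem_powerset] at hK hmax
      obtain ⟨hKs, hIK, hKi⟩ := hK
      have : ¬ J ⊆ K := fun h => hJ (hKi.mono (by exact_mod_cast h))
      obtain ⟨u, huJ, huK⟩ := Finset.not_subset.1 this
      refine ⟨K, u, hIK, hKs.trans (Finset.union_subset hIA hJA), ?_, hKi, hJA huJ, huK, ?_⟩
      · calc K.card ≤ (I ∪ J).card := Finset.card_le_card hKs
          _ ≤ I.card + J.card := Finset.card_union_le _ _
          _ ≤ 2 * H := by omega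
      · by_contra hns
        have hins : Ind (insert u K) := by
          unfold Ind; rw [Finset.coe_insert]
          apply LinearIndepOn.insert hKi
          simpa [Spn] using hns
        have := hmax (insert u K) ⟨Finset.insert_subset (by simp [huJ]) hKs, hIK.trans (Finset.subset_insert _ _), hins⟩
        rw [Finset.card_insert_of_notMem huK] at this
        omega
    have hle : (∑ h ∈ range (H+1), ((A.powersetCard h).filter Ind).card)
        ≤ ∑ l ∈ range (2*H+1), 2^l *
        (((A.powersetCard l) ×ˢ A).filter fun p => Ind p.1 ∧ p.2 ∉ p.1 ∧ Spn p.1 p.2).card := by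
      have e1 : (∑ h ∈ range (H+1), ((A.powersetCard h).filter Ind).card)
          = (A.powerset.filter fun I => I.card ≤ H ∧ Ind I).card := by
        rw [Finset.card_eq_sum_card_fiberwise (f := Finset.card) (t := range (H+1))]
        · apply Finset.sum_congr rfl
          intro h hh
          congr 1
          ext I
          simp only [mem_filter, mem_powersetCard, mem_powerset, mem_range] at hh ⊢
          constructor
          · rintro ⟨⟨a, b⟩, c⟩; exact ⟨⟨a, by omega, c⟩, b⟩
          · rintro ⟨⟨a, b, c⟩, d⟩; exact ⟨⟨a, d⟩, c⟩
        · intro I hI; simp at hI ⊢; omega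
      rw [e1]
      have e2 : (A.powerset.filter fun I => I.card ≤ H ∧ Ind I) ⊆
          (range (2*H+1)).biUnion fun l => (((A.powersetCard l) ×ˢ A).filter fun p => Ind p.1 ∧ p.2 ∉ p.1 ∧ Spn p.1 p.2).biUnion
            fun p => p.1.powerset := by
        intro I hI
        simp only [mem_filter, mem_powerset] at hI
        obtain ⟨J', u, h1, h2, h3, h4, h5, h6, h7⟩ := key I hI.1 hI.2.1 hI.2.2
        simp only [mem_biUnion, mem_range, mem_filter, mem_product, mem_powersetCard, mem_powerset]
        exact ⟨J'.card, by omega, (J', u), ⟨⟨⟨h2, rfl⟩, h5⟩, h4, h6, h7⟩, h1⟩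
      refine (Finset.card_le_card e2).trans (Finset.card_biUnion_le.trans (Finset.sum_le_sum fun l _ => ?_))
      refine Finset.card_biUnion_le.trans ?_
      rw [mul_comm]
      apply Finset.sum_le_card_nsmul
      intro p hp
      simp only [mem_filter, mem_product, mem_powersetCard] at hp
      rw [Finset.card_powerset, hp.1.1.2]
    have hle' : (∑ h ∈ range (H+1), (((A.powersetCard h).filter Ind).card : ℝ))
        ≤ ∑ l ∈ range (2*H+1), (2:ℝ)^l *
        (((A.powersetCard l) ×ˢ A).filter fun p => Ind p.1 ∧ p.2 ∉ p.1 ∧ Spn p.1 p.2).card := by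
      exact_mod_cast hle
    have : -(∑ h ∈ range (H+1), (((A.powersetCard h).filter Ind).card : ℝ)) ≤
        ∑ h ∈ range (H+1), (-1:ℝ)^h * ((A.powersetCard h).filter Ind).card := by
      rw [← Finset.sum_neg_distrib]
      apply Finset.sum_le_sum
      intro h _
      rcases neg_one_pow_eq_or ℝ h with e | e <;> rw [e]
      · have : (0:ℝ) ≤ ((A.powersetCard h).filter Ind).card := by positivity
        linarith
      · linarith
    linarith
  · push Not at hbad
    have e : ∀ h ∈ range (H+1), (-1:ℝ)^h * ((A.powersetCard h).filter Ind).card = (-1:ℝ)^h * (A.card.choose h : ℝ) := by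
      intro h hh
      rw [Finset.filter_true_of_mem, Finset.card_powersetCard]
      intro J hJ
      rw [mem_powersetCard] at hJ
      exact hbad J hJ.1 (by simp at hh; omega)
    rw [Finset.sum_congr rfl e]
    by_cases hA : A = ∅
    · subst hA
      simp only [if_true]
      have : ∑ h ∈ range (H+1), (-1:ℝ)^h * ((∅ : Finset (ι → F)).card.choose h : ℝ) = 1 := by
        rw [Finset.sum_range_succ']
        simp
      linarith
    · rw [if_neg hA]
      have := alt_sum_nonneg A.card H (by simpa using hA) hH
      linarith

end PartD

section PartD2
open Finset
variable {F : Type} [Field F] [Fintype F] [DecidableEq F] {ι : Type} [Fintype ι] [DecidableEq ι]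
  {G : Type} [AddCommGroup G] [Module F G] [Fintype G] [DecidableEq G]

open Classical in
def IS (S : Finset (ι → F)) (h : ℕ) : ℕ := ((S.powersetCard h).filter Ind).card
open Classical in
def BS (S : Finset (ι → F)) (l : ℕ) : ℕ :=
  (((S.powersetCard l) ×ˢ S).filter fun p => Ind p.1 ∧ p.2 ∉ p.1 ∧ Spn p.1 p.2).card

def AA (S : Finset (ι → F)) (τ : ι → G) : Finset (ι → F) := S.filter fun s => evv τ s = 0

open Classical in
theorem sum_IS (S : Finset (ι → F)) (h : ℕ) :
    (∑ τ : ι → G, (IS (AA S τ) h : ℝ)) * (Fintype.card G : ℝ) ^ h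
      = IS S h * (Fintype.card G : ℝ) ^ Fintype.card ι := by
  have e1 : ∀ τ : ι → G, (IS (AA S τ) h : ℝ) = ∑ J ∈ (S.powersetCard h).filter Ind,
      if (∀ t ∈ J, evv τ t = 0) then (1:ℝ) else 0 := by
    intro τ
    rw [Finset.sum_boole, IS]
    congr 2
    ext J
    simp only [AA, mem_filter, mem_powersetCard, Finset.subset_iff]
    constructor
    · rintro ⟨⟨a, b⟩, c⟩; exact ⟨⟨⟨fun x hx => (a hx).1, b⟩, c⟩, fun x hx => (a hx).2⟩
    · rintro ⟨⟨⟨a, b⟩, c⟩, d⟩; exact ⟨⟨fun x hx => ⟨a hx, d x hx⟩, b⟩, c⟩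
  simp_rw [e1]
  rw [Finset.sum_comm, Finset.sum_mul]
  simp_rw [Finset.sum_boole]
  rw [Finset.sum_congr rfl (g := fun _ => (Fintype.card G : ℝ) ^ Fintype.card ι), Finset.sum_const, nsmul_eq_mul, IS]
  intro J hJ
  simp only [mem_filter, mem_powersetCard] at hJ
  rw [← card_evv_set (G := G) J hJ.2, hJ.1.2]

open Classical in
theorem sum_BS (S : Finset (ι → F)) (l : ℕ) :
    (∑ τ : ι → G, (BS (AA S τ) l : ℝ)) * (Fintype.card G : ℝ) ^ l
      = BS S l * (Fintype.card G : ℝ) ^ Fintype.card ι := by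
  have e1 : ∀ τ : ι → G, (BS (AA S τ) l : ℝ) = ∑ p ∈ ((S.powersetCard l) ×ˢ S).filter (fun p => Ind p.1 ∧ p.2 ∉ p.1 ∧ Spn p.1 p.2),
      if (∀ t ∈ p.1, evv τ t = 0) then (1:ℝ) else 0 := by
    intro τ
    rw [Finset.sum_boole, BS]
    congr 2
    ext ⟨J, u⟩
    simp only [AA, mem_filter, mem_powersetCard, Finset.subset_iff, mem_product]
    constructor
    · rintro ⟨⟨⟨a, b⟩, c⟩, d⟩; exact ⟨⟨⟨⟨fun x hx => (a hx).1, b⟩, c.1⟩, d⟩, fun x hx => (a hx).2⟩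
    · rintro ⟨⟨⟨⟨a, b⟩, c⟩, e⟩, d⟩
      exact ⟨⟨⟨fun x hx => ⟨a hx, d x hx⟩, b⟩, c, evv_span τ J u e.2.2 d⟩, e⟩
  simp_rw [e1]
  rw [Finset.sum_comm, Finset.sum_mul]
  simp_rw [Finset.sum_boole]
  rw [Finset.sum_congr rfl (g := fun _ => (Fintype.card G : ℝ) ^ Fintype.card ι), Finset.sum_const, nsmul_eq_mul, BS]
  intro J hJ
  simp only [mem_filter, mem_powersetCard, mem_product] at hJ
  rw [← card_evv_set (G := G) J.1 hJ.2.1, hJ.1.1.2]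

/-- the relation-count hypothesis -/
def RelHyp (S : Finset (ι → F)) (η : ℝ) (L : ℕ) : Prop :=
  ∀ (κ : Type) [Fintype κ] [DecidableEq κ] (μ : κ → F), (∀ t, μ t ≠ 0) → 2 ≤ Fintype.card κ →
    Fintype.card κ ≤ L →
    (Fintype.card F : ℝ) ^ Fintype.card κ *
      (univ.filter fun f : κ → ι → F => (∀ t, f t ∈ S) ∧ ∑ t, μ t • f t ∈ S).card
      ≤ η * (S.card : ℝ) ^ Fintype.card κ

theorem rel_full (S : Finset (ι → F)) (η : ℝ) (L l : ℕ) (hR : RelHyp S η L) (hl : l ≤ L)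
    (μ : Fin l → F) (h2 : 2 ≤ (univ.filter fun t => μ t ≠ 0).card) :
    ((univ.filter fun f : Fin l → ι → F => (∀ t, f t ∈ S) ∧ ∑ t, μ t • f t ∈ S).card : ℝ)
      ≤ η * (S.card : ℝ) ^ l * ∏ t, (if μ t = 0 then (1:ℝ) else 1 / Fintype.card F) := by
  have hq : (0:ℝ) < Fintype.card F := by exact_mod_cast Fintype.card_pos
  have hc : Fintype.card {t // μ t ≠ 0} = (univ.filter fun t => μ t ≠ 0).card := Fintype.card_subtype _
  set i := (univ.filter fun t => μ t ≠ 0).card with hi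
  have hil : i ≤ l := by
    calc i ≤ (univ : Finset (Fin l)).card := Finset.card_filter_le _ _
      _ = l := by simp
  have h1 := hR {t // μ t ≠ 0} (fun t => μ t) (fun t => t.2) (by rw [hc]; exact h2) (by rw [hc]; omega)
  rw [hc] at h1
  have hc0 : Fintype.card {t // ¬ (μ t ≠ 0)} = l - i := by
    rw [Fintype.card_subtype_compl, hc, Fintype.card_fin]
  have hle : (univ.filter fun f : Fin l → ι → F => (∀ t, f t ∈ S) ∧ ∑ t, μ t • f t ∈ S).card ≤
      (univ.filter fun f : {t // μ t ≠ 0} → ι → F => (∀ t, f t ∈ S) ∧ ∑ t : {t // μ t ≠ 0}, μ t.1 • f t ∈ S).card *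
      S.card ^ (l - i) := by
    have : S.card ^ (l - i) = (Fintype.piFinset fun _ : {t // ¬ (μ t ≠ 0)} => S).card := by
      rw [Fintype.card_piFinset]; simp only [Finset.prod_const, Finset.card_univ, hc0]
    rw [this, ← Finset.card_product]
    apply Finset.card_le_card_of_injOn (fun f => Equiv.piEquivPiSubtypeProd (fun t => μ t ≠ 0) (fun _ => ι → F) f)
    · intro f hf
      simp only [coe_filter, mem_univ, true_and, Set.mem_ofPred_eq] at hf
      simp only [coe_product, Set.mem_prod, mem_coe, mem_filter, mem_univ, true_and, Fintype.mem_piFinset]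
      refine ⟨⟨fun t => hf.1 _, ?_⟩, fun t => hf.1 _⟩
      convert hf.2 using 1
      simp only [Equiv.piEquivPiSubtypeProd_apply]
      rw [← Finset.sum_subtype (univ.filter fun t => μ t ≠ 0) (p := fun t => μ t ≠ 0) (f := fun t => μ t • f t) (by simp)]
      apply Finset.sum_subset (Finset.subset_univ _)
      intro x _ hx
      have : μ x = 0 := by simpa using hx
      simp [this]
    · exact (Equiv.injective _).injOn
  have hprod : ∏ t, (if μ t = 0 then (1:ℝ) else 1 / Fintype.card F) = (1 / (Fintype.card F : ℝ)) ^ i := by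
    rw [Finset.prod_ite]; simp [hi]
  rw [hprod]
  have hle' : ((univ.filter fun f : Fin l → ι → F => (∀ t, f t ∈ S) ∧ ∑ t, μ t • f t ∈ S).card : ℝ) ≤
      (univ.filter fun f : {t // μ t ≠ 0} → ι → F => (∀ t, f t ∈ S) ∧ ∑ t : {t // μ t ≠ 0}, μ t.1 • f t ∈ S).card *
      (S.card : ℝ) ^ (l - i) := by exact_mod_cast hle
  refine hle'.trans ?_
  rw [one_div, inv_pow, ← div_eq_mul_inv, le_div_iff₀ (by positivity)]
  have e3 : (S.card : ℝ) ^ l = (S.card : ℝ) ^ i * (S.card : ℝ) ^ (l - i) := by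
    rw [← pow_add]; congr 1; omega
  rw [e3]
  have := mul_le_mul_of_nonneg_right h1 (show (0:ℝ) ≤ (S.card : ℝ) ^ (l - i) by positivity)
  linarith

open Classical in
theorem BS_le (S : Finset (ι → F)) (η : ℝ) (hη : 0 ≤ η) (L l : ℕ) (hR : RelHyp S η L) (hl : l ≤ L)
    (h0 : (0 : ι → F) ∉ S) (h1 : ∀ s ∈ S, ∀ c : F, c • s ∈ S → c = 1) :
    (l.factorial : ℝ) * BS S l ≤ 2 ^ l * η * (S.card : ℝ) ^ l := by
  have hq : (0:ℝ) < Fintype.card F := by exact_mod_cast Fintype.card_pos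
  let T : Finset ((Fin l → F) × (Fin l → ι → F)) :=
    univ.filter fun p => 2 ≤ (univ.filter fun t => p.1 t ≠ 0).card ∧ (∀ t, p.2 t ∈ S) ∧ ∑ t, p.1 t • p.2 t ∈ S
  have hT : (T.card : ℝ) ≤ 2 ^ l * η * (S.card : ℝ) ^ l := by
    have e : (T.card : ℝ) = ∑ μ : Fin l → F, if 2 ≤ (univ.filter fun t => μ t ≠ 0).card then
        ((univ.filter fun f : Fin l → ι → F => (∀ t, f t ∈ S) ∧ ∑ t, μ t • f t ∈ S).card : ℝ) else 0 := by
      have : (T.card : ℝ) = ∑ p : (Fin l → F) × (Fin l → ι → F),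
          if (2 ≤ (univ.filter fun t => p.1 t ≠ 0).card ∧ (∀ t, p.2 t ∈ S) ∧ ∑ t, p.1 t • p.2 t ∈ S) then (1:ℝ) else 0 := by
        rw [Finset.sum_boole]
      rw [this, Fintype.sum_prod_type]
      apply Finset.sum_congr rfl
      intro μ _
      split_ifs with h
      · simp only [h, true_and]; rw [Finset.sum_boole]
      · simp [h]
    rw [e]
    calc _ ≤ ∑ μ : Fin l → F, η * (S.card : ℝ) ^ l * ∏ t, (if μ t = 0 then (1:ℝ) else 1 / Fintype.card F) := by
          apply Finset.sum_le_sum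
          intro μ _
          split_ifs with h
          · exact rel_full S η L l hR hl μ h
          · apply mul_nonneg (by positivity)
            apply Finset.prod_nonneg; intro t _; split_ifs <;> positivity
      _ = η * (S.card : ℝ) ^ l * (∑ x : F, if x = 0 then (1:ℝ) else 1 / Fintype.card F) ^ l := by
          rw [← Finset.mul_sum, Fintype.sum_pow]
      _ ≤ η * (S.card : ℝ) ^ l * 2 ^ l := by
          gcongr
          · calc (∑ x : F, if x = 0 then (1:ℝ) else 1 / Fintype.card F)
                ≤ ∑ x : F, ((if x = 0 then (1:ℝ) else 0) + 1 / Fintype.card F) := by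
                  apply Finset.sum_le_sum; intro x _
                  split_ifs
                  · have : (0:ℝ) ≤ 1 / Fintype.card F := by positivity
                    linarith
                  · linarith
              _ = 2 := by
                  rw [Finset.sum_add_distrib]; simp; field_simp; norm_num
      _ = _ := by ring
  refine le_trans ?_ hT
  set P := (((S.powersetCard l) ×ˢ S).filter fun p => Ind p.1 ∧ p.2 ∉ p.1 ∧ Spn p.1 p.2) with hP
  have hPS : BS S l = P.card := rfl
  rw [hPS]
  have hex : ∀ p : Finset (ι → F) × (ι → F), ∃ (f : Fin l → ι → F) (μ : Fin l → F), p ∈ P →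
      Function.Injective f ∧ univ.image f = p.1 ∧ ∑ t, μ t • f t = p.2 := by
    intro p
    by_cases hp : p ∈ P
    · simp only [hP, mem_filter, mem_product, mem_powersetCard] at hp
      obtain ⟨⟨⟨hpS, hpl⟩, hpu⟩, hpI, hpn, hps⟩ := hp
      let e : Fin l ≃ p.1 := (p.1.equivFinOfCardEq hpl).symm
      have hset : (p.1 : Set (ι → F)) = Set.range (fun t => ((e t : p.1) : ι → F)) := by
        ext x; simp only [mem_coe, Set.mem_range]
        constructor
        · intro hx; exact ⟨e.symm ⟨x, hx⟩, by simp⟩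
        · rintro ⟨t, rfl⟩; exact (e t).2
      have h3 := hps
      unfold Spn at h3
      rw [hset, Submodule.mem_span_range_iff_exists_fun] at h3
      obtain ⟨μ, hμ⟩ := h3
      refine ⟨fun t => e t, μ, fun _ => ⟨?_, ?_, hμ⟩⟩
      · intro a b hab; exact e.injective (Subtype.ext hab)
      · ext x; rw [← Finset.mem_coe (s := p.1), hset]; simp
    · exact ⟨0, 0, fun h => absurd h hp⟩
  choose f μ hfμ using hex
  have hcard : (univ : Finset (Equiv.Perm (Fin l))).card = l.factorial := by
    rw [Finset.card_univ, Fintype.card_perm, Fintype.card_fin]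
  rw [← hcard, ← Nat.cast_mul, Nat.cast_le, ← Finset.card_product]
  have hsum : ∀ (σ : Equiv.Perm (Fin l)) p, ∑ t, μ p (σ t) • f p (σ t) = ∑ t, μ p t • f p t := by
    intro σ p; exact Equiv.sum_comp σ (fun t => μ p t • f p t)
  apply Finset.card_le_card_of_injOn (fun x => (μ x.2 ∘ x.1, f x.2 ∘ x.1))
  · rintro ⟨σ, p⟩ hx
    simp only [coe_product, Set.mem_prod, mem_coe, mem_univ, true_and] at hx
    obtain ⟨hi, him, hu⟩ := hfμ p hx
    have hx' := hx
    simp only [hP, mem_filter, mem_product, mem_powersetCard] at hx'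
    obtain ⟨⟨⟨hpS, hpl⟩, hpu⟩, hpI, hpn, hps⟩ := hx'
    have hfm : ∀ t, f p t ∈ p.1 := fun t => by rw [← him]; exact Finset.mem_image_of_mem _ (Finset.mem_univ t)
    simp only [T, coe_filter, mem_univ, true_and, Set.mem_ofPred_eq, Function.comp]
    refine ⟨?_, fun t => hpS (hfm _), by rw [hsum, hu]; exact hpu⟩
    by_contra hlt
    push Not at hlt
    have hlt1 : (univ.filter fun t => μ p (σ t) ≠ 0).card ≤ 1 := by omega
    rw [Finset.card_le_one] at hlt1
    simp only [mem_filter, mem_univ, true_and] at hlt1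
    by_cases hz : ∃ t, μ p (σ t) ≠ 0
    · obtain ⟨t, ht⟩ := hz
      have hsg : ∑ t, μ p (σ t) • f p (σ t) = μ p (σ t) • f p (σ t) := by
        apply Finset.sum_eq_single t
        · intro b _ hb
          have : μ p (σ b) = 0 := by
            by_contra hb'
            exact hb (hlt1 b hb' t ht)
          simp [this]
        · simp
      rw [hsum, hu] at hsg
      have hone := h1 (f p (σ t)) (hpS (hfm _)) (μ p (σ t)) (by rw [← hsg]; exact hpu)
      rw [hone, one_smul] at hsg
      exact hpn (by rw [hsg]; exact hfm _)
    · push Not at hz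
      have : p.2 = 0 := by rw [← hu, ← hsum σ p]; simp [hz]
      exact h0 (by rw [← this]; exact hpu)
  · rintro ⟨σ, p⟩ hx ⟨σ', p'⟩ hx' heq
    simp only [coe_product, Set.mem_prod, mem_coe, mem_univ, true_and] at hx hx'
    obtain ⟨hi, him, hu⟩ := hfμ p hx
    obtain ⟨hi', him', hu'⟩ := hfμ p' hx'
    simp only [Prod.mk.injEq] at heq
    obtain ⟨e1, e2⟩ := heq
    have hpp : p = p' := by
      apply Prod.ext
      · rw [← him, ← him']
        have a1 : ∀ (σ : Equiv.Perm (Fin l)) p, univ.image (f p) = univ.image (f p ∘ σ) := by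
          intro σ p; ext x; simp only [mem_image, mem_univ, true_and, Function.comp]
          exact (σ.surjective.exists (p := fun t => f p t = x))
        rw [a1 σ p, a1 σ' p', e2]
      · rw [← hu, ← hu', ← hsum σ p, ← hsum σ' p']
        apply Finset.sum_congr rfl
        intro t _
        have b1 := congrFun e1 t
        have b2 := congrFun e2 t
        simp only [Function.comp] at b1 b2
        rw [b1, b2]
    subst hpp
    congr 1
    ext t
    have := hi (congrFun e2 t)
    rw [this]

end PartD2

section PartD3
open Finset
variable {F : Type} [Field F] [Fintype F] [DecidableEq F] {ι : Type} [Fintype ι] [DecidableEq ι]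
  {G : Type} [AddCommGroup G] [Module F G] [Fintype G] [DecidableEq G]

open Classical in
theorem IS_rec (S : Finset (ι → F)) (h : ℕ) :
    ((S.card : ℝ) - h) * IS S h - BS S h ≤ (h + 1) * IS S (h+1) := by
  set P := ((S.powersetCard h).filter Ind) with hP
  set Q := (P.sigma fun J => S \ J) with hQ
  have hQc : Q.card = (S.card - h) * IS S h := by
    rw [hQ, Finset.card_sigma, Finset.sum_congr rfl (g := fun _ => S.card - h), Finset.sum_const, smul_eq_mul, mul_comm]
    · rfl
    · intro J hJ
      simp only [hP, mem_filter, mem_powersetCard] at hJ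
      rw [Finset.card_sdiff_of_subset hJ.1.1, hJ.1.2]
  have h1 : (Q.filter fun x => Spn x.1 x.2).card ≤ BS S h := by
    apply Finset.card_le_card_of_injOn (fun x => (x.1, x.2))
    · rintro ⟨J, u⟩ hx
      simp only [hQ, hP, coe_filter, mem_sigma, mem_filter, mem_powersetCard, mem_sdiff, Set.mem_ofPred_eq] at hx
      simp only [coe_filter, mem_product, mem_powersetCard, Set.mem_ofPred_eq]
      tauto
    · rintro ⟨J, u⟩ _ ⟨J', u'⟩ _ h; simp at h; simp [h]
  have h2 : (Q.filter fun x => ¬ Spn x.1 x.2).card ≤ (h+1) * IS S (h+1) := by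
    have : (h+1) * IS S (h+1) = (((S.powersetCard (h+1)).filter Ind).sigma fun K => K).card := by
      rw [Finset.card_sigma, Finset.sum_congr rfl (g := fun _ => h+1), Finset.sum_const, smul_eq_mul, mul_comm]
      · rfl
      · intro J hJ
        simp only [mem_filter, mem_powersetCard] at hJ
        exact hJ.1.2
    rw [this]
    apply Finset.card_le_card_of_injOn (fun x => ⟨insert x.2 x.1, x.2⟩)
    · rintro ⟨J, u⟩ hx
      simp only [hQ, hP, coe_filter, mem_sigma, mem_filter, mem_powersetCard, mem_sdiff, Set.mem_ofPred_eq] at hx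
      obtain ⟨⟨⟨⟨hJS, hJc⟩, hJI⟩, huS, huJ⟩, hsp⟩ := hx
      simp only [coe_sigma, Set.mem_sigma_iff, mem_coe, mem_filter, mem_powersetCard]
      refine ⟨⟨⟨Finset.insert_subset huS hJS, by rw [Finset.card_insert_of_notMem huJ, hJc]⟩, ?_⟩, by simp⟩
      unfold Ind; rw [Finset.coe_insert]
      apply LinearIndepOn.insert hJI
      simpa [Spn] using hsp
    · rintro ⟨J, u⟩ hx ⟨J', u'⟩ hx' heq
      simp only [hQ, hP, coe_filter, mem_sigma, mem_filter, mem_powersetCard, mem_sdiff, Set.mem_ofPred_eq] at hx hx'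
      simp only [Sigma.mk.injEq, heq_eq_eq] at heq
      obtain ⟨e1, rfl⟩ := heq
      have : J = J' := by
        rw [← Finset.erase_insert hx.1.2.2, e1, Finset.erase_insert hx'.1.2.2]
      subst this; rfl
  have h3 := Finset.card_filter_add_card_filter_not (s := Q) (fun x => Spn x.1 x.2)
  have h4 : (S.card - h) * IS S h ≤ BS S h + (h+1) * IS S (h+1) := by
    rw [← hQc, ← h3]; omega
  have h5 : ((S.card : ℝ) - h) * IS S h ≤ ((S.card - h : ℕ) : ℝ) * IS S h := by
    gcongr
    rw [sub_le_iff_le_add]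
    exact_mod_cast (by omega : S.card ≤ S.card - h + h)
  have h6 : ((S.card - h : ℕ) : ℝ) * IS S h ≤ BS S h + (h+1) * IS S (h+1) := by exact_mod_cast h4
  linarith

theorem IS_le (S : Finset (ι → F)) (h : ℕ) : (h.factorial : ℝ) * IS S h ≤ (S.card : ℝ) ^ h := by
  classical
  have h1 : IS S h ≤ S.card.choose h := by
    rw [← Finset.card_powersetCard]; exact Finset.card_filter_le _ _
  have h2 := Nat.choose_le_pow_div (α := ℝ) h S.card
  have h3 : (IS S h : ℝ) ≤ S.card.choose h := by exact_mod_cast h1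
  have h4 := h3.trans h2
  rw [le_div_iff₀ (by positivity)] at h4
  linarith

theorem IS_ge (S : Finset (ι → F)) (η : ℝ) (hη : 0 ≤ η) (H : ℕ) (hS : 0 < S.card)
    (hB : ∀ l ≤ H, (l.factorial : ℝ) * BS S l ≤ 2 ^ l * η * (S.card : ℝ) ^ l) (h : ℕ) (hh : h ≤ H) :
    (S.card : ℝ) ^ h * (1 - h * (H + 2 ^ H * η) / S.card) ≤ (h.factorial : ℝ) * IS S h := by
  classical
  have hS' : (0:ℝ) < S.card := by exact_mod_cast hS
  induction h with
  | zero =>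
    have : IS S 0 = 1 := by
      unfold IS
      rw [Finset.powersetCard_zero, Finset.filter_true_of_mem]; · simp
      intro J hJ; simp at hJ; subst hJ; simp [Ind]
    rw [this]; simp
  | succ h ih =>
    have ih := ih (by omega)
    have r := IS_rec S h
    have b := hB h (by omega)
    have u := IS_le S h
    have f0 : (0:ℝ) < h.factorial := by positivity
    have r2 := mul_le_mul_of_nonneg_left r f0.le
    have e : ((h+1).factorial : ℝ) = (h+1) * h.factorial := by rw [Nat.factorial_succ]; push_cast; ring
    rw [e]
    have hhH : (h:ℝ) ≤ H := by exact_mod_cast (by omega : h ≤ H)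
    have h2H : (2:ℝ)^h * η ≤ 2^H * η := by
      gcongr
      · norm_num
      · omega
    set a := (h.factorial : ℝ) * IS S h with ha
    set n := (S.card : ℝ) with hn
    have p0 : 0 ≤ n ^ h := by positivity
    have ha0 : 0 ≤ a := by positivity
    have k1 : (h:ℝ) * a ≤ H * n ^ h := mul_le_mul hhH u ha0 (by positivity)
    have k2 : 2^h * η * n^h ≤ 2^H * η * n^h := mul_le_mul_of_nonneg_right h2H p0
    have k3 : n ^ (h+1) * (1 - h * (H + 2 ^ H * η) / n) ≤ n * a := by
      have := mul_le_mul_of_nonneg_left ih hS'.le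
      calc _ = n * (n ^ h * (1 - h * (H + 2 ^ H * η) / n)) := by ring
        _ ≤ _ := this
    have k4 : n ^ (h+1) * (1 - ((h+1:ℕ):ℝ) * (H + 2 ^ H * η) / n)
        = n ^ (h+1) * (1 - h * (H + 2 ^ H * η) / n) - n ^ h * (H + 2^H * η) := by
      push_cast; field_simp; ring
    rw [k4]
    have r3 : (n - h) * a - (h.factorial : ℝ) * BS S h ≤ (h+1) * h.factorial * IS S (h+1) := by
      rw [ha]; nlinarith [r2]
    nlinarith [r3, k1, k2, k3, b]

theorem exp_partial_le (x : ℝ) (hx : 0 ≤ x) (m : ℕ) : ∑ h ∈ range m, x ^ h / h.factorial ≤ Real.exp x :=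
  Real.sum_le_exp_of_nonneg hx m

open Classical in
theorem partD (S : Finset (ι → F)) (η : ℝ) (hη : 0 ≤ η) (v H : ℕ) (hH : Even H) (hv : 0 < v)
    (hR : RelHyp S η (2*H)) (hS : S.card = v * Fintype.card G)
    (h0 : (0 : ι → F) ∉ S) (h1 : ∀ s ∈ S, ∀ c : F, c • s ∈ S → c = 1) :
    ((univ.filter fun τ : ι → G => ∀ s ∈ S, evv τ s ≠ 0).card : ℝ) ≤
      (Fintype.card G : ℝ) ^ Fintype.card ι *
      (∑ h ∈ range (H+1), (-(v:ℝ)) ^ h / h.factorial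
        + Real.exp v * (H * (H + 2 ^ H * η) / S.card) + η * Real.exp (4 * v)) := by
  have hg : (0:ℝ) < Fintype.card G := by exact_mod_cast Fintype.card_pos
  set g := (Fintype.card G : ℝ) with hgdef
  have hSpos : 0 < S.card := by rw [hS]; exact Nat.mul_pos hv Fintype.card_pos
  have hn : (S.card : ℝ) = v * g := by rw [hS]; push_cast; rfl
  have hn0 : (0:ℝ) < S.card := by exact_mod_cast hSpos
  have hBS : ∀ l ≤ 2*H, (l.factorial : ℝ) * BS S l ≤ 2 ^ l * η * (S.card : ℝ) ^ l :=
    fun l hl => BS_le S η hη (2*H) l hR hl h0 h1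
  have e0 : ((univ.filter fun τ : ι → G => ∀ s ∈ S, evv τ s ≠ 0).card : ℝ)
      = ∑ τ : ι → G, if AA S τ = ∅ then (1:ℝ) else 0 := by
    rw [Finset.sum_boole]
    congr 2
    ext τ
    simp [AA, Finset.filter_eq_empty_iff]
  have e1 : ∑ τ : ι → G, (if AA S τ = ∅ then (1:ℝ) else 0) ≤
      ∑ τ : ι → G, (∑ h ∈ range (H+1), (-1:ℝ)^h * IS (AA S τ) h + ∑ l ∈ range (2*H+1), (2:ℝ)^l * BS (AA S τ) l) :=
    Finset.sum_le_sum fun τ _ => pointwise (AA S τ) H hH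
  rw [e0]
  refine e1.trans ?_
  have e2 : ∑ τ : ι → G, (∑ h ∈ range (H+1), (-1:ℝ)^h * IS (AA S τ) h + ∑ l ∈ range (2*H+1), (2:ℝ)^l * BS (AA S τ) l)
      = ∑ h ∈ range (H+1), (-1:ℝ)^h * ∑ τ : ι → G, (IS (AA S τ) h : ℝ)
        + ∑ l ∈ range (2*H+1), (2:ℝ)^l * ∑ τ : ι → G, (BS (AA S τ) l : ℝ) := by
    simp_rw [Finset.mul_sum]
    rw [Finset.sum_add_distrib]
    congr 1
    · exact Finset.sum_comm
    · exact Finset.sum_comm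
  rw [e2]
  have i1 : ∀ h, ∑ τ : ι → G, (IS (AA S τ) h : ℝ) = g ^ Fintype.card ι * (IS S h / g ^ h) := by
    intro h
    have := sum_IS (G := G) S h
    rw [← hgdef] at this
    field_simp; linarith
  have i2 : ∀ h, ∑ τ : ι → G, (BS (AA S τ) h : ℝ) = g ^ Fintype.card ι * (BS S h / g ^ h) := by
    intro h
    have := sum_BS (G := G) S h
    rw [← hgdef] at this
    field_simp; linarith
  simp_rw [i1, i2]
  set D := g ^ Fintype.card ι
  have hD : 0 ≤ D := by positivity
  have j1 : ∀ h ∈ range (H+1), (-1:ℝ)^h * (D * (IS S h / g ^ h)) ≤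
      D * ((-(v:ℝ)) ^ h / h.factorial + (v:ℝ)^h / h.factorial * (H * (H + 2 ^ H * η) / S.card)) := by
    intro h hh
    have hhH : h ≤ H := by simp at hh; omega
    have up := IS_le S h
    have lo := IS_ge S η hη H hSpos (fun l hl => hBS l (by omega)) h hhH
    have hf : (0:ℝ) < h.factorial := by positivity
    set X := (H:ℝ) + 2 ^ H * η with hX
    have hX0 : 0 ≤ X := by positivity
    have up' : (IS S h : ℝ) / g ^ h ≤ (v:ℝ)^h / h.factorial := by
      rw [div_le_div_iff₀ (by positivity) hf]
      rw [hn, mul_pow] at up; linarith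
    have lo' : (v:ℝ)^h / h.factorial - (v:ℝ)^h / h.factorial * (H * X / S.card) ≤ (IS S h : ℝ) / g ^ h := by
      have l2 : (v:ℝ)^h / h.factorial * (1 - h * X / S.card) ≤ (IS S h : ℝ) / g ^ h := by
        rw [div_mul_eq_mul_div, div_le_div_iff₀ hf (by positivity)]
        calc _ = (S.card:ℝ)^h * (1 - h * X / S.card) := by rw [hn, mul_pow]; ring
          _ ≤ _ := lo
          _ = _ := by ring
      have l3 : (h:ℝ) * X / S.card ≤ H * X / S.card := by
        gcongr
      have l4 : 0 ≤ (v:ℝ)^h / h.factorial := by positivity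
      nlinarith
    have hz : 0 ≤ (v:ℝ)^h / h.factorial * (H * X / S.card) := by positivity
    rw [mul_left_comm]
    apply mul_le_mul_of_nonneg_left _ hD
    rw [neg_pow (v:ℝ) h]
    rcases neg_one_pow_eq_or ℝ h with e | e <;> rw [e]
    · rw [one_mul, one_mul]; linarith
    · have : -1 * (v:ℝ)^h / h.factorial = - ((v:ℝ)^h / h.factorial) := by ring
      rw [this]; linarith
  have j2 : ∀ l ∈ range (2*H+1), (2:ℝ)^l * (D * (BS S l / g ^ l)) ≤ D * (η * ((4 * v:ℝ)^l / l.factorial)) := by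
    intro l hl
    have b := hBS l (by simp at hl; omega)
    have hf : (0:ℝ) < l.factorial := by positivity
    rw [mul_left_comm]
    apply mul_le_mul_of_nonneg_left _ hD
    rw [hn, mul_pow] at b
    rw [mul_div_assoc', mul_div_assoc', div_le_div_iff₀ (by positivity) hf, mul_pow]
    have : (4:ℝ)^l = 2^l * 2^l := by rw [← mul_pow]; norm_num
    rw [this]
    have := mul_le_mul_of_nonneg_left b (show (0:ℝ) ≤ 2^l by positivity)
    nlinarith
  calc _ ≤ (∑ h ∈ range (H+1), D * ((-(v:ℝ)) ^ h / h.factorial + (v:ℝ)^h / h.factorial * (H * (H + 2 ^ H * η) / S.card)))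
        + ∑ l ∈ range (2*H+1), D * (η * ((4 * v:ℝ)^l / l.factorial)) :=
        add_le_add (Finset.sum_le_sum j1) (Finset.sum_le_sum j2)
    _ = D * (∑ h ∈ range (H+1), (-(v:ℝ)) ^ h / h.factorial
        + (∑ h ∈ range (H+1), (v:ℝ)^h / h.factorial) * (H * (H + 2 ^ H * η) / S.card)
        + η * ∑ l ∈ range (2*H+1), (4 * v:ℝ)^l / l.factorial) := by
        rw [← Finset.mul_sum, ← Finset.mul_sum, ← Finset.mul_sum, Finset.sum_add_distrib, ← Finset.sum_mul]; ring
    _ ≤ _ := by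
        apply mul_le_mul_of_nonneg_left _ hD
        have a1 := exp_partial_le (v:ℝ) (by positivity) (H+1)
        have a2 := exp_partial_le (4*v:ℝ) (by positivity) (2*H+1)
        gcongr

/-- truncated exponential -/
theorem trunc_exp (v : ℕ) :
    ∑ h ∈ range (4*v+1), (-(v:ℝ)) ^ h / h.factorial ≤ 2 * Real.exp (-v) := by
  have hs : ∀ x : ℝ, HasSum (fun h : ℕ => x ^ h / h.factorial) (Real.exp x) := fun x => by
    rw [Real.exp_eq_exp_ℝ]; exact NormedSpace.expSeries_div_hasSum_exp x
  set H := 4*v with hH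
  have h1 := (hasSum_nat_add_iff' (H+1)).2 (hs (-v))
  have h2 := (hs (4*v)).mul_left ((1/4:ℝ)^H)
  have h3 := (hasSum_nat_add_iff' (H+1)).2 h2
  have h4 : ∀ h, - ((-(v:ℝ)) ^ (h+(H+1)) / (h+(H+1)).factorial) ≤ (1/4:ℝ)^H * ((4*v:ℝ)^(h+(H+1)) / (h+(H+1)).factorial) := by
    intro h
    rw [mul_div_assoc', ← neg_div]
    gcongr
    calc -(-(v:ℝ)) ^ (h+(H+1)) ≤ |(-(v:ℝ)) ^ (h+(H+1))| := neg_le_abs _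
      _ = (v:ℝ)^(h+(H+1)) := by rw [abs_pow, abs_neg, Nat.abs_cast]
      _ = (1/4:ℝ)^(h+(H+1)) * (4*v:ℝ)^(h+(H+1)) := by rw [← mul_pow]; congr 1; ring
      _ ≤ _ := by
        apply mul_le_mul_of_nonneg_right _ (by positivity)
        exact pow_le_pow_of_le_one (by norm_num) (by norm_num) (by omega)
  have h5 := hasSum_le h4 h1.neg h3
  have h6 : 0 ≤ ∑ i ∈ range (H+1), (1/4:ℝ)^H * ((4*v:ℝ)^i / i.factorial) := by positivity
  have h7 : (1/4:ℝ)^H * Real.exp (4*v) ≤ Real.exp (-v) := by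
    have a : Real.exp (4*v) = (Real.exp 4) ^ v := by rw [← Real.exp_nat_mul]; ring_nf
    have b : Real.exp (-v) = (Real.exp (-1)) ^ v := by rw [← Real.exp_nat_mul]; ring_nf
    rw [a, b, hH, pow_mul, ← mul_pow]
    gcongr
    have : Real.exp (-1) * Real.exp 5 = Real.exp 4 := by rw [← Real.exp_add]; norm_num
    have c : Real.exp 5 ≤ 256 := by
      have : Real.exp 5 = Real.exp 1 ^ 5 := by rw [← Real.exp_nat_mul]; norm_num
      rw [this]
      calc Real.exp 1 ^ 5 ≤ 3 ^ 5 := by gcongr; exact Real.exp_one_lt_three.le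
        _ ≤ 256 := by norm_num
    rw [← this]
    have := Real.exp_pos (-1)
    nlinarith
  linarith
end PartD3

section PartD4
open Finset
variable {F : Type} [Field F] [Fintype F] [DecidableEq F] 
  {G : Type} [AddCommGroup G] [Module F G] [Fintype G] [DecidableEq G]

def lft {N : ℕ} (s : Fin N → F) : Option (Fin N) → F := fun o => o.elim 1 s

theorem lft_inj {N : ℕ} : Function.Injective (lft : (Fin N → F) → _) := by
  intro a b h; ext i; exact congrFun h (some i)

theorem relhyp_lft {N : ℕ} (S : Finset (Fin N → F)) (η : ℝ) (L : ℕ) (hR : RelHyp S η L) :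
    RelHyp (S.map ⟨lft, lft_inj⟩) η L := by
  intro κ _ _ μ h1 h2 h3
  have := hR κ μ h1 h2 h3
  rw [Finset.card_map]
  refine le_trans ?_ this
  gcongr
  apply Finset.card_le_card_of_injOn (fun f t i => f t (some i))
  · intro f hf
    simp only [coe_filter, mem_univ, true_and, Set.mem_ofPred_eq, mem_map, Function.Embedding.coeFn_mk] at hf ⊢
    refine ⟨fun t => ?_, ?_⟩
    · obtain ⟨a, ha, e⟩ := hf.1 t
      rw [← e]; exact ha
    · obtain ⟨a, ha, e⟩ := hf.2
      convert ha using 1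
      ext i
      have := congrFun e (some i)
      simp only [lft, Option.elim] at this
      rw [this]; simp
  · intro f hf f' hf' h
    simp only [coe_filter, mem_univ, true_and, Set.mem_ofPred_eq, mem_map, Function.Embedding.coeFn_mk] at hf hf'
    ext t o
    obtain ⟨a, ha, e⟩ := hf.1 t
    obtain ⟨a', ha', e'⟩ := hf'.1 t
    rcases o with _ | i
    · rw [← e, ← e']; rfl
    · exact congrFun (congrFun h t) i

open Classical in
theorem partD_final {N : ℕ} (S : Finset (Fin N → F)) (η : ℝ) (hη : 0 ≤ η) (v : ℕ) (hv : 0 < v)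
    (hR : RelHyp S η (8*v)) (hS : S.card = v * Fintype.card G)
    (hη2 : η ≤ Real.exp (-(5*v))) (hG : 20 * v * Real.exp (2*v) ≤ Fintype.card G) :
    ∃ W : Fin N → G, ((univ.filter fun y : G => ∀ s ∈ S, evv W s ≠ y).card : ℝ) ≤
      4 * Real.exp (-v) * Fintype.card G := by
  have hg : (0:ℝ) < Fintype.card G := by exact_mod_cast Fintype.card_pos
  set S' := S.map ⟨lft, lft_inj⟩ with hS'
  have hS'c : S'.card = v * Fintype.card G := by rw [hS', Finset.card_map, hS]
  have key := partD (G := G) S' η hη v (4*v) ⟨2*v, by ring⟩ hv (by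
    have := relhyp_lft S η (8*v) hR
    convert this using 1; ring) hS'c
    (by
      intro h
      simp only [hS', mem_map, Function.Embedding.coeFn_mk] at h
      obtain ⟨a, _, e⟩ := h
      have := congrFun e none
      simp [lft] at this)
    (by
      intro s hs c hc
      simp only [hS', mem_map, Function.Embedding.coeFn_mk] at hs hc
      obtain ⟨a, _, rfl⟩ := hs
      obtain ⟨a', _, e'⟩ := hc
      have := congrFun e' none
      simp [lft] at this
      exact this.symm)
  have hε : (∑ h ∈ range (4*v+1), (-(v:ℝ)) ^ h / h.factorial
        + Real.exp v * (((4*v:ℕ):ℝ) * ((4*v:ℕ) + 2 ^ (4*v) * η) / S'.card) + η * Real.exp (4 * v)) ≤ 4 * Real.exp (-v) := by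
    have t1 := trunc_exp v
    have t3 : η * Real.exp (4*v) ≤ Real.exp (-v) := by
      calc η * Real.exp (4*v) ≤ Real.exp (-(5*v)) * Real.exp (4*v) := by gcongr
        _ = _ := by rw [← Real.exp_add]; ring_nf
    have t2 : Real.exp v * (((4*v:ℕ):ℝ) * ((4*v:ℕ) + 2 ^ (4*v) * η) / S'.card) ≤ Real.exp (-v) := by
      have u1 : (2:ℝ) ^ (4*v) * η ≤ 1 := by
        calc (2:ℝ) ^ (4*v) * η ≤ (2:ℝ)^(4*v) * Real.exp (-(5*v)) := by gcongr
          _ ≤ (Real.exp 1)^(4*v) * Real.exp (-(5*v)) := by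
            gcongr; have := Real.exp_one_gt_d9; linarith
          _ = Real.exp (-v) := by rw [← Real.exp_nat_mul, ← Real.exp_add]; push_cast; ring_nf
          _ ≤ 1 := by rw [Real.exp_le_one_iff]; simp
      rw [hS'c]
      have v1 : (1:ℝ) ≤ v := by exact_mod_cast hv
      have w : Real.exp (-v) = Real.exp v / Real.exp (2*v) := by rw [← Real.exp_sub]; ring_nf
      rw [w, div_eq_mul_one_div (Real.exp (v:ℝ))]
      refine mul_le_mul_of_nonneg_left ?_ (Real.exp_pos _).le
      rw [div_le_div_iff₀ (by push_cast; positivity) (by positivity)]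
      push_cast
      have : 4 * v * (4 * v + 2^(4*v) * η) ≤ v * (20 * v) := by nlinarith
      calc 4 * v * (4 * v + 2^(4*v) * η) * Real.exp (2*v) ≤ v * (20 * v) * Real.exp (2*v) := by gcongr
        _ = v * (20 * v * Real.exp (2*v)) := by ring
        _ ≤ v * Fintype.card G := by gcongr
        _ = _ := by ring
    linarith
  have key2 := key.trans (mul_le_mul_of_nonneg_left hε (by positivity))
  by_contra hcon
  push Not at hcon
  have e1 : ((univ.filter fun τ : Option (Fin N) → G => ∀ s ∈ S', evv τ s ≠ 0).card : ℝ)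
      = ∑ W : Fin N → G, ((univ.filter fun y : G => ∀ s ∈ S, evv W s ≠ y).card : ℝ) := by
    have : (univ.filter fun τ : Option (Fin N) → G => ∀ s ∈ S', evv τ s ≠ 0).card
      = (univ.sigma fun W : Fin N → G => univ.filter fun y : G => ∀ s ∈ S, evv W s ≠ y).card := by
      have aux : ∀ (τ : Option (Fin N) → G) s, evv τ (lft s) = τ none + evv (fun i => τ (some i)) (s : Fin N → F) := by
        intro τ s; simp [evv, lft, Fintype.sum_option]
      apply Finset.card_bij (fun τ _ => ⟨fun i => τ (some i), - τ none⟩)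
      · intro τ hτ
        simp only [hS', mem_filter, mem_univ, true_and, mem_map, forall_exists_index, and_imp, Function.Embedding.coeFn_mk, forall_apply_eq_imp_iff₂, mem_sigma] at hτ ⊢
        intro s hs h
        apply hτ s hs
        rw [aux, h]; simp
      · intro τ _ τ' _ h
        simp only [Sigma.mk.injEq, heq_eq_eq, neg_inj] at h
        ext o
        rcases o with _ | i
        · exact h.2
        · exact congrFun h.1 i
      · rintro ⟨W, y⟩ h
        simp only [mem_filter, mem_univ, true_and, mem_sigma] at h
        refine ⟨fun o => o.elim (-y) W, ?_, by simp⟩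
        simp only [hS', mem_filter, mem_univ, true_and, mem_map, forall_exists_index, and_imp, Function.Embedding.coeFn_mk, forall_apply_eq_imp_iff₂]
        intro s hs h'
        rw [aux] at h'
        apply h s hs
        simp only [Option.elim] at h'
        exact (neg_add_eq_zero.1 h').symm
    rw [this, Finset.card_sigma]; push_cast; rfl
  have e2 : ∑ W : Fin N → G, (4 * Real.exp (-v) * Fintype.card G) <
      ∑ W : Fin N → G, ((univ.filter fun y : G => ∀ s ∈ S, evv W s ≠ y).card : ℝ) :=
    Finset.sum_lt_sum_of_nonempty ⟨0, mem_univ _⟩ (fun W _ => hcon W)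
  rw [← e1, Finset.sum_const, Finset.card_univ, nsmul_eq_mul, Fintype.card_fun, Fintype.card_fin] at e2
  rw [Fintype.card_option, Fintype.card_fin] at key2
  push_cast at e2
  have : (Fintype.card G : ℝ)^(N+1) * (4 * Real.exp (-v)) = (Fintype.card G : ℝ)^N * (4 * Real.exp (-v) * Fintype.card G) := by ring
  linarith
end PartD4

section PartC
open Finset
variable {G : Type} [AddCommGroup G] [Fintype G] [DecidableEq G]

def D1 (U : Finset G) (e : G) : Finset G := U.filter fun g => g - e ∈ U

theorem sum_D1 (U : Finset G) : ∑ e, (D1 U e).card = U.card ^ 2 := by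
  have : ∀ e, (D1 U e).card = ∑ g ∈ U, if g - e ∈ U then 1 else 0 := by
    intro e; rw [Finset.sum_boole]; rfl
  simp_rw [this]
  rw [Finset.sum_comm]
  have h2 : ∀ g ∈ U, (∑ e, if g - e ∈ U then 1 else 0) = U.card := by
    intro g _
    rw [Finset.sum_boole, Nat.cast_id]
    apply Finset.card_bij (fun e _ => g - e)
    · intro e he; simpa using he
    · intro a _ b _ h; exact sub_right_injective h
    · intro b hb; exact ⟨g - b, by simpa using hb, by simp⟩
  rw [Finset.sum_congr rfl h2, Finset.sum_const, smul_eq_mul, sq]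

theorem markov1 (U : Finset G) (ε K : ℝ) (hε : 0 < ε) (hK : 0 < K) (hU : (U.card : ℝ) ≤ ε * Fintype.card G) :
    ((univ.filter fun e => K * ε ^ 2 * Fintype.card G < (D1 U e).card).card : ℝ) * K ≤ Fintype.card G := by
  have hg : (0:ℝ) < Fintype.card G := by exact_mod_cast Fintype.card_pos
  set g := (Fintype.card G : ℝ)
  set B := (univ.filter fun e => K * ε ^ 2 * g < (D1 U e).card) with hB
  have h1 : (B.card : ℝ) * (K * ε ^ 2 * g) ≤ ∑ e ∈ B, ((D1 U e).card : ℝ) := by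
    rw [← nsmul_eq_mul]
    apply Finset.card_nsmul_le_sum
    intro x hx; simp only [hB, mem_filter] at hx; exact hx.2.le
  have h2 : ∑ e ∈ B, ((D1 U e).card : ℝ) ≤ ∑ e, ((D1 U e).card : ℝ) :=
    Finset.sum_le_sum_of_subset_of_nonneg (Finset.subset_univ _) (by intros; positivity)
  have h3 : ∑ e, ((D1 U e).card : ℝ) = (U.card : ℝ) ^ 2 := by exact_mod_cast sum_D1 U
  have h4 : (U.card : ℝ) ^ 2 ≤ (ε * g) ^ 2 := by gcongr
  have h5 : (B.card : ℝ) * K * (ε ^ 2 * g) ≤ g * (ε ^ 2 * g) := by nlinarith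
  exact le_of_mul_le_mul_right h5 (by positivity)

theorem markov2 (U : Finset G) (ε K : ℝ) (hε : 0 < ε) (hK : 0 < K) (hU : (U.card : ℝ) ≤ ε * Fintype.card G) :
    ((univ.filter fun p : G × G => K ^ 3 * ε ^ 4 * Fintype.card G < (D1 (D1 U p.1) p.2).card).card : ℝ) * K
      ≤ 2 * (Fintype.card G : ℝ) ^ 2 := by
  have m1 := markov1 U ε K hε hK hU
  set g := (Fintype.card G : ℝ) with hg
  have hg0 : 0 ≤ g := by positivity
  have e1 : ((univ.filter fun p : G × G => K ^ 3 * ε ^ 4 * g < (D1 (D1 U p.1) p.2).card).card : ℝ)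
      = ∑ a : G, ((univ.filter fun b : G => K ^ 3 * ε ^ 4 * g < (D1 (D1 U a) b).card).card : ℝ) := by
    have : ((univ.filter fun p : G × G => K ^ 3 * ε ^ 4 * g < (D1 (D1 U p.1) p.2).card).card : ℝ)
      = ∑ p : G × G, if K ^ 3 * ε ^ 4 * g < (D1 (D1 U p.1) p.2).card then (1:ℝ) else 0 := by
      rw [Finset.sum_boole]
    rw [this, Fintype.sum_prod_type]
    simp_rw [Finset.sum_boole]
  rw [e1, Finset.sum_mul]
  have e2 : ∀ a : G, ((univ.filter fun b : G => K ^ 3 * ε ^ 4 * g < (D1 (D1 U a) b).card).card : ℝ) * K ≤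
      (if K * ε ^ 2 * g < (D1 U a).card then K * g else 0) + g := by
    intro a
    split_ifs with h
    · have : ((univ.filter fun b : G => K ^ 3 * ε ^ 4 * g < (D1 (D1 U a) b).card).card : ℝ) ≤ g := by
        rw [hg, ← Finset.card_univ]; exact_mod_cast Finset.card_filter_le _ _
      nlinarith
    · push Not at h
      have := markov1 (D1 U a) (K * ε ^ 2) K (by positivity) hK h
      have e3 : K * (K * ε ^ 2) ^ 2 = K ^ 3 * ε ^ 4 := by ring
      rw [e3] at this
      linarith
  refine (Finset.sum_le_sum fun a _ => e2 a).trans ?_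
  rw [Finset.sum_add_distrib, ← Finset.sum_filter, Finset.sum_const, Finset.sum_const, nsmul_eq_mul, nsmul_eq_mul, Finset.card_univ, ← hg]
  nlinarith

/-- the three shapes -/
def sv1 : Fin 3 → ℤ × ℤ := ![(1,0), (1,0), (0,1)]
def sv2 : Fin 3 → ℤ × ℤ := ![(0,1), (-1,1), (1,-1)]
def rh (t : Fin 3) : Finset (ℤ × ℤ) := {0, sv1 t, sv2 t, sv1 t + sv2 t}
def ap (p : G × G) (z : ℤ × ℤ) : G := z.1 • p.1 + z.2 • p.2

theorem ap_add (p : G × G) (z w : ℤ × ℤ) : ap p (z + w) = ap p z + ap p w := by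
  simp [ap, add_smul]; abel

def DD (U : Finset G) (t : Fin 3) (p : G × G) : Finset G := D1 (D1 U (ap p (sv1 t))) (ap p (sv2 t))

theorem ap_inj (t : Fin 3) : Function.Injective (fun p : G × G => (ap p (sv1 t), ap p (sv2 t))) := by
  rintro ⟨a, b⟩ ⟨a', b'⟩ h
  fin_cases t
  · simpa [ap, sv1, sv2] using h
  · simp [ap, sv1, sv2] at h ⊢
    obtain ⟨rfl, h⟩ := h; simpa using h
  · simp [ap, sv1, sv2] at h ⊢
    obtain ⟨rfl, h⟩ := h; simpa using h

theorem markov3 (U : Finset G) (ε K : ℝ) (t : Fin 3) (hε : 0 < ε) (hK : 0 < K) (hU : (U.card : ℝ) ≤ ε * Fintype.card G) :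
    ((univ.filter fun p : G × G => K ^ 3 * ε ^ 4 * Fintype.card G < (DD U t p).card).card : ℝ) * K
      ≤ 2 * (Fintype.card G : ℝ) ^ 2 := by
  refine le_trans ?_ (markov2 U ε K hε hK hU)
  gcongr ?_ * K
  norm_cast
  apply Finset.card_le_card_of_injOn (fun p : G × G => (ap p (sv1 t), ap p (sv2 t)))
  · intro p hp
    simp only [coe_filter, mem_univ, true_and, Set.mem_ofPred_eq] at hp ⊢
    exact hp
  · exact (ap_inj t).injOn

theorem choose_pair (𝓕 : Finset (Finset G)) (ε K : ℝ) (hε : 0 < ε) (hK : 0 < K)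
    (hU : ∀ U ∈ 𝓕, (U.card : ℝ) ≤ ε * Fintype.card G) (hc : 6 * (𝓕.card : ℝ) < K) :
    ∃ p : G × G, ∀ U ∈ 𝓕, ∀ t, ((DD U t p).card : ℝ) ≤ K ^ 3 * ε ^ 4 * Fintype.card G := by
  by_contra hcon
  push Not at hcon
  have hg : (0:ℝ) < Fintype.card G := by exact_mod_cast Fintype.card_pos
  set g := (Fintype.card G : ℝ) with hgd
  have h1 : (univ : Finset (G × G)) ⊆ (𝓕 ×ˢ (univ : Finset (Fin 3))).biUnion fun x =>
      univ.filter fun p : G × G => K ^ 3 * ε ^ 4 * g < (DD x.1 x.2 p).card := by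
    intro p _
    obtain ⟨U, hU, t, h⟩ := hcon p
    simp only [mem_biUnion, mem_product, mem_filter, mem_univ, true_and, and_true]
    exact ⟨(U, t), hU, h⟩
  have h2 := (Finset.card_le_card h1).trans Finset.card_biUnion_le
  have h3 : ((univ : Finset (G × G)).card : ℝ) ≤ ∑ x ∈ 𝓕 ×ˢ (univ : Finset (Fin 3)),
      ((univ.filter fun p : G × G => K ^ 3 * ε ^ 4 * g < (DD x.1 x.2 p).card).card : ℝ) := by exact_mod_cast h2
  have h4 := mul_le_mul_of_nonneg_right h3 hK.le
  rw [Finset.sum_mul] at h4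
  have h5 := h4.trans (Finset.sum_le_card_nsmul _ _ (2 * g ^ 2) (by
    intro x hx
    simp only [mem_product] at hx
    exact markov3 x.1 ε K x.2 hε hK (hU _ hx.1)))
  rw [Finset.card_product, Finset.card_univ, Fintype.card_prod, Finset.card_univ, Fintype.card_fin, nsmul_eq_mul] at h5
  push_cast at h5
  rw [← hgd] at h5
  nlinarith [mul_pos hg hg]

theorem partC_fam (M : ℕ) : ∀ (𝓕 : Finset (Finset G)) (ε K : ℝ) (hε : 0 < ε) (hK : 0 < K)
    (hU : ∀ U ∈ 𝓕, (U.card : ℝ) ≤ ε * Fintype.card G) (hc : 2 * 3 ^ M * (𝓕.card : ℝ) < K)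
    (hs : (K * ε) ^ (4 ^ M) * Fintype.card G < K),
    ∃ x : Fin M → G × G, ∀ U ∈ 𝓕, ∀ τ : Fin M → Fin 3, ∀ g : G, ∃ ζ : Fin M → ℤ × ℤ,
      (∀ i, ζ i ∈ rh (τ i)) ∧ g - ∑ i, ap (x i) (ζ i) ∉ U := by
  induction M with
  | zero =>
    intro 𝓕 ε K hε hK hU hc hs
    refine ⟨Fin.elim0, fun U hUF τ g => ⟨Fin.elim0, fun i => i.elim0, ?_⟩⟩
    have h := hU U hUF
    have : U = ∅ := by
      rw [← Finset.card_eq_zero]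
      have : (U.card : ℝ) < 1 := by
        refine lt_of_le_of_lt h ?_
        simp only [pow_zero, pow_one] at hs
        have : K * (ε * Fintype.card G) < K * 1 := by linarith
        exact lt_of_mul_lt_mul_left this hK.le
      have h1 : U.card < 1 := by exact_mod_cast this
      omega
    simp [this]
  | succ M ih =>
    intro 𝓕 ε K hε hK hU hc hs
    have h3M : (1:ℝ) ≤ 3 ^ M := one_le_pow₀ (by norm_num)
    obtain ⟨p, hp⟩ := choose_pair 𝓕 ε K hε hK hU (by
      rw [pow_succ] at hc
      have : (0:ℝ) ≤ 𝓕.card := by positivity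
      nlinarith)
    obtain ⟨x, hx⟩ := ih ((𝓕 ×ˢ (univ : Finset (Fin 3))).image fun y => DD y.1 y.2 p) (K ^ 3 * ε ^ 4) K (by positivity) hK
      (by
        intro U hU'
        simp only [mem_image, mem_product, mem_univ, and_true] at hU'
        obtain ⟨⟨V, t⟩, hV, rfl⟩ := hU'
        exact hp V hV t)
      (by
        have h1 : (((𝓕 ×ˢ (univ : Finset (Fin 3))).image fun y => DD y.1 y.2 p).card : ℝ) ≤ 3 * 𝓕.card := by
          have := Finset.card_image_le (s := 𝓕 ×ˢ (univ : Finset (Fin 3))) (f := fun y => DD y.1 y.2 p)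
          rw [Finset.card_product, Finset.card_univ, Fintype.card_fin, mul_comm] at this
          exact_mod_cast this
        calc _ ≤ 2 * 3 ^ M * (3 * (𝓕.card : ℝ)) := by gcongr
          _ = 2 * 3 ^ (M+1) * 𝓕.card := by ring
          _ < K := hc)
      (by
        have : (K * (K ^ 3 * ε ^ 4)) = (K * ε) ^ 4 := by ring
        rw [this, ← pow_mul, ← pow_succ']
        exact hs)
    refine ⟨Fin.cons p x, fun U hUF τ g => ?_⟩
    obtain ⟨ζ, hζ, hn⟩ := hx (DD U (τ 0) p) (by
      simp only [mem_image, mem_product, mem_univ, and_true]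
      exact ⟨(U, τ 0), hUF, rfl⟩) (fun i => τ i.succ) g
    set g' := g - ∑ i, ap (x i) (ζ i) with hg'
    have : ∃ z ∈ rh (τ 0), g' - ap p z ∉ U := by
      by_contra hcon
      push Not at hcon
      apply hn
      have a0 := hcon 0 (by simp [rh])
      have a1 := hcon (sv1 (τ 0)) (by simp [rh])
      have a2 := hcon (sv2 (τ 0)) (by simp [rh])
      have a3 := hcon (sv1 (τ 0) + sv2 (τ 0)) (by simp [rh])
      have e0 : g' - ap p 0 = g' := by simp [ap]
      rw [e0] at a0
      rw [ap_add, add_comm, ← sub_sub] at a3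
      simp only [DD, D1, mem_filter]
      exact ⟨⟨a0, a1⟩, a2, a3⟩
    obtain ⟨z, hz, hzn⟩ := this
    refine ⟨Fin.cons z ζ, ?_, ?_⟩
    · intro i
      refine Fin.cases ?_ (fun i => ?_) i
      · simpa using hz
      · simpa using hζ i
    · rw [Fin.sum_univ_succ]
      simp only [Fin.cons_zero, Fin.cons_succ]
      rw [add_comm, ← sub_sub, ← hg']
      exact hzn

theorem partC (M : ℕ) (U : Finset G) (ε K : ℝ) (hε : 0 < ε)
    (hU : (U.card : ℝ) ≤ ε * Fintype.card G) (hc : 2 * 3 ^ M < K)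
    (hs : (K * ε) ^ (4 ^ M) * Fintype.card G < K) :
    ∃ x : Fin M → G × G, ∀ τ : Fin M → Fin 3, ∀ g : G, ∃ ζ : Fin M → ℤ × ℤ,
      (∀ i, ζ i ∈ rh (τ i)) ∧ g - ∑ i, ap (x i) (ζ i) ∉ U := by
  obtain ⟨x, hx⟩ := partC_fam M {U} ε K hε (lt_trans (by positivity) hc) (by simpa using hU) (by simpa using hc) hs
  exact ⟨x, fun τ g => hx U (by simp) τ g⟩

/-- hexagonal form -/
def QQ (u v : ℝ) : ℝ := u ^ 2 + u * v + v ^ 2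

theorem hex_tri (u v : ℝ) (hu : 0 ≤ u) (hv : 0 ≤ v) (h : u + v ≤ 1) :
    ∃ t : Fin 3, ∀ e ∈ rh t, QQ (u - e.1) (v - e.2) ≤ 4 / 3 := by
  by_cases h0 : 1 - u - v ≤ u ∧ 1 - u - v ≤ v
  · refine ⟨0, ?_⟩
    intro e he
    simp [rh, sv1, sv2] at he
    rcases he with rfl | rfl | rfl | rfl <;> simp [QQ] <;> nlinarith
  · by_cases h1 : u ≤ v
    · refine ⟨1, ?_⟩
      have : u ≤ 1 - u - v := by
        by_contra hc; push Not at hc; exact h0 ⟨hc.le, by linarith⟩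
      intro e he
      simp [rh, sv1, sv2] at he
      rcases he with rfl | rfl | rfl | rfl <;> simp [QQ] <;> nlinarith
    · refine ⟨2, ?_⟩
      push Not at h1
      have : v ≤ 1 - u - v := by
        by_contra hc; push Not at hc; exact h0 ⟨by linarith, by linarith⟩
      intro e he
      simp [rh, sv1, sv2] at he
      rcases he with rfl | rfl | rfl | rfl <;> simp [QQ] <;> nlinarith

theorem hex_cover (u v : ℝ) : ∃ (z : ℤ × ℤ) (t : Fin 3), ∀ e ∈ rh t,
    QQ (u - (z.1 + e.1 : ℤ)) (v - (z.2 + e.2 : ℤ)) ≤ 4 / 3 := by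
  have fu0 := Int.fract_nonneg u
  have fv0 := Int.fract_nonneg v
  have fu1 := (Int.fract_lt_one u).le
  have fv1 := (Int.fract_lt_one v).le
  have eu := Int.floor_add_fract u
  have ev := Int.floor_add_fract v
  by_cases h : Int.fract u + Int.fract v ≤ 1
  · obtain ⟨t, ht⟩ := hex_tri _ _ fu0 fv0 h
    refine ⟨(⌊u⌋, ⌊v⌋), t, fun e he => ?_⟩
    have := ht e he
    convert this using 2
    · push_cast; linarith
    · push_cast; linarith
  · push Not at h
    obtain ⟨t, ht⟩ := hex_tri (1 - Int.fract u) (1 - Int.fract v) (by linarith) (by linarith) (by linarith)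
    refine ⟨(⌊u⌋ + 1 - (sv1 t + sv2 t).1, ⌊v⌋ + 1 - (sv1 t + sv2 t).2), t, fun e he => ?_⟩
    have hr : sv1 t + sv2 t - e ∈ rh t := by
      simp only [rh, mem_insert, mem_singleton] at he ⊢
      rcases he with rfl | rfl | rfl | rfl
      · right; right; right; simp
      · right; right; left; abel
      · right; left; abel
      · left; abel
    have := ht _ hr
    have e3 : ∀ a b : ℝ, QQ (-a) (-b) = QQ a b := by intro a b; simp [QQ]
    rw [← e3] at this
    convert this using 2
    · push_cast [Prod.fst_sub]; linarith
    · push_cast [Prod.snd_sub]; linarith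
end PartC

section PartA
open Finset

theorem partA {ι G : Type} [Fintype ι] [DecidableEq ι] [AddCommGroup G] [Fintype G] {n : ℕ} (e : ι ≃ Fin n)
    (φ : (ι → ℤ) →+ G) (hφ : Function.Surjective φ) (P : Matrix ι ι ℝ) (hP : P.det ≠ 0) (R : ℝ) (hR : 0 ≤ R)
    (hcov : ∀ y : ι → ℝ, ∃ z : ι → ℤ, φ z = 0 ∧ ∑ i, (y i - P.mulVec (fun j => (z j : ℝ)) i) ^ 2 ≤ R ^ 2) :
    ∃ b : Fin n → EuclideanSpace ℝ (Fin n), IsLatticeCovering b R ∧ latticeDet b = Fintype.card G * |P.det| := by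
  classical
  set f := φ.toIntLinearMap with hf
  set K := LinearMap.ker f with hK
  have eqv : ((ι → ℤ) ⧸ K) ≃ₗ[ℤ] G := LinearMap.quotKerEquivOfSurjective f hφ
  have hcardι : Fintype.card ι = n := by rw [Fintype.card_congr e, Fintype.card_fin]
  have : Finite ((ι → ℤ) ⧸ K) := Finite.of_equiv G eqv.symm.toEquiv
  have hcard : Nat.card ((ι → ℤ) ⧸ K) = Fintype.card G := by
    rw [Nat.card_congr eqv.toEquiv, Nat.card_eq_fintype_card]
  have hrank : Module.finrank ℤ K = n := by
    rw [(Submodule.finiteQuotient_iff K).1 inferInstance, Module.finrank_pi, hcardι]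
  let bK : Module.Basis (Fin n) ℤ K := Module.finBasisOfFinrankEq ℤ K hrank
  have hdet := Submodule.natAbs_det_basis_change ((Pi.basisFun ℤ ι).reindex e) K bK
  rw [hcard] at hdet
  let Z : Matrix (Fin n) (Fin n) ℤ := Matrix.of fun i j => (bK j : ι → ℤ) (e.symm i)
  have hZ : Z.det.natAbs = Fintype.card G := by
    rw [← hdet, Module.Basis.det_apply]
    congr 2
  let b : Fin n → EuclideanSpace ℝ (Fin n) := fun j => WithLp.toLp 2 (fun i => P.mulVec (fun k => ((bK j : ι → ℤ) k : ℝ)) (e.symm i))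
  have hmat : (Matrix.of fun i j => b j i) = P.submatrix e.symm e.symm * Z.map (Int.cast : ℤ → ℝ) := by
    ext i j
    simp only [Matrix.of_apply, b, Matrix.mul_apply, Matrix.submatrix_apply, Matrix.map_apply, Z, Matrix.mulVec, dotProduct]
    exact (Equiv.sum_comp e.symm (fun x => P (e.symm i) x * ((bK j : ι → ℤ) x : ℝ))).symm
  have hdetm : |(Matrix.of fun i j => b j i).det| = Fintype.card G * |P.det| := by
    rw [hmat, Matrix.det_mul, Matrix.det_submatrix_equiv_self, abs_mul, mul_comm]
    congr 1
    have : (Z.map (Int.cast : ℤ → ℝ)).det = (Z.det : ℝ) := by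
      have := (Int.castRingHom ℝ).map_det Z
      simp only [RingHom.mapMatrix_apply] at this
      exact this.symm
    rw [this, ← hZ, Nat.cast_natAbs, Int.cast_abs]
  have hG0 : (0:ℝ) < Fintype.card G := by exact_mod_cast Fintype.card_pos
  refine ⟨b, ⟨?_, ?_⟩, hdetm⟩
  · have hne : (Matrix.of fun i j => b j i).det ≠ 0 := by
      rw [← abs_pos, hdetm]; positivity
    have hli := Matrix.linearIndependent_cols_of_det_ne_zero hne
    have : LinearIndependent ℝ ((WithLp.linearEquiv 2 ℝ (Fin n → ℝ)).toLinearMap ∘ b) := hli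
    exact LinearIndependent.of_comp _ this
  · rw [Set.eq_univ_iff_forall]
    intro x
    obtain ⟨z, hz, hd⟩ := hcov (fun i => x (e i))
    have hzK : z ∈ K := hz
    set c := bK.repr ⟨z, hzK⟩ with hc
    have hzc : ∀ k, z k = ∑ j, c j * (bK j : ι → ℤ) k := by
      intro k
      have h1 := bK.sum_repr ⟨z, hzK⟩
      have h2 := congrArg (fun w : K => (w : ι → ℤ) k) h1
      simp only at h2
      rw [← h2, Submodule.coe_sum, Finset.sum_apply]
      rfl
    set s := ∑ j, (c j : ℝ) • b j with hs
    have hsi : ∀ i, s (e i) = P.mulVec (fun j => (z j : ℝ)) i := by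
      intro i
      simp only [hs, WithLp.ofLp_sum, Finset.sum_apply, WithLp.ofLp_smul, Pi.smul_apply, b, Equiv.symm_apply_apply, smul_eq_mul, Matrix.mulVec, dotProduct]
      simp_rw [hzc, Finset.mul_sum]
      rw [Finset.sum_comm]
      push_cast
      simp_rw [Finset.mul_sum]
      refine Finset.sum_congr rfl fun k _ => Finset.sum_congr rfl fun j _ => by ring
    refine Set.mem_add.2 ⟨s, ⟨fun j => c j, hs⟩, x - s, ?_, by simp⟩
    rw [mem_closedBall_zero_iff, EuclideanSpace.norm_eq]
    apply Real.sqrt_le_iff.2 ⟨hR, ?_⟩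
    refine le_trans (le_of_eq ?_) hd
    rw [← Equiv.sum_comp e]
    refine Finset.sum_congr rfl fun i _ => ?_
    rw [← hsi]; simp [sq_abs]
end PartA

section PartB
open Finset

theorem tri_sum {N : ℕ} (a b : Fin N → ℝ) (A B : ℝ) (hA : 0 ≤ A) (hB : 0 ≤ B)
    (ha : ∑ i, a i ^ 2 ≤ A ^ 2) (hb : ∑ i, b i ^ 2 ≤ B ^ 2) : ∑ i, (a i - b i) ^ 2 ≤ (A + B) ^ 2 := by
  have key : ∀ c : Fin N → ℝ, ‖(WithLp.toLp 2 c : EuclideanSpace ℝ (Fin N))‖ ^ 2 = ∑ i, c i ^ 2 := by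
    intro c; rw [EuclideanSpace.norm_sq_eq]; simp
  have h1 : ‖(WithLp.toLp 2 a : EuclideanSpace ℝ (Fin N))‖ ≤ A := by
    rw [← key] at ha; exact abs_le_of_sq_le_sq' ha hA |>.2
  have h2 : ‖(WithLp.toLp 2 b : EuclideanSpace ℝ (Fin N))‖ ≤ B := by
    rw [← key] at hb; exact abs_le_of_sq_le_sq' hb hB |>.2
  have h3 := norm_sub_le (WithLp.toLp 2 a : EuclideanSpace ℝ (Fin N)) (WithLp.toLp 2 b)
  rw [← WithLp.toLp_sub] at h3
  have := key (a - b)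
  simp only [Pi.sub_apply] at this
  rw [← this]
  gcongr
  linarith

def PM (N M : ℕ) (s : ℝ) : Matrix (Fin N ⊕ (Fin M ⊕ Fin M)) (Fin N ⊕ (Fin M ⊕ Fin M)) ℝ :=
  Matrix.fromBlocks 1 0 0 (Matrix.fromBlocks (s • 1) ((s / 2) • 1) 0 ((s * √3 / 2) • 1))

theorem PM_det (N M : ℕ) (s : ℝ) : (PM N M s).det = (s ^ 2 * √3 / 2) ^ M := by
  rw [PM, Matrix.det_fromBlocks_zero₂₁, Matrix.det_fromBlocks_zero₂₁]
  simp [← mul_pow]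
  congr 1; ring

theorem partB {G : Type} [AddCommGroup G] [Fintype G] [DecidableEq G] (N M n : ℕ) (hn : N + 2 * M = n)
    (w : (Fin N → ℤ) →+ G) (S : Finset (Fin N → ℤ)) (ρ : ℝ) (hρ : 0 ≤ ρ)
    (hS : ∀ s ∈ S, ∑ i, (s i : ℝ) ^ 2 ≤ ρ ^ 2) (x : Fin M → G × G)
    (hit : ∀ (τ : Fin M → Fin 3) (g : G), ∃ ζ : Fin M → ℤ × ℤ,
      (∀ i, ζ i ∈ rh (τ i)) ∧ ∃ s ∈ S, w s = g - ∑ i, ap (x i) (ζ i))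
    (s : ℝ) (hs : 0 < s) :
    ∃ b : Fin n → EuclideanSpace ℝ (Fin n),
      IsLatticeCovering b (√((√N / 2 + ρ) ^ 2 + 4 / 3 * s ^ 2 * M)) ∧
      latticeDet b = Fintype.card G * (s ^ 2 * √3 / 2) ^ M := by
  have h3 : (0:ℝ) < √3 := by positivity
  have h33 : √3 ^ 2 = 3 := Real.sq_sqrt (by norm_num)
  let φ : (Fin N ⊕ (Fin M ⊕ Fin M) → ℤ) →+ G :=
    { toFun := fun z => w (fun i => z (Sum.inl i)) + ∑ i, ap (x i) (z (Sum.inr (Sum.inl i)), z (Sum.inr (Sum.inr i)))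
      map_zero' := by
        have : w (fun _ => 0) = 0 := map_zero w
        simp [ap, this]
      map_add' := by
        intro a b
        have h1 : w (fun i => (a + b) (Sum.inl i)) = w (fun i => a (Sum.inl i)) + w (fun i => b (Sum.inl i)) := by
          rw [← map_add]; rfl
        have h2 : ∀ i, ap (x i) ((a+b) (Sum.inr (Sum.inl i)), (a+b) (Sum.inr (Sum.inr i)))
            = ap (x i) (a (Sum.inr (Sum.inl i)), a (Sum.inr (Sum.inr i))) + ap (x i) (b (Sum.inr (Sum.inl i)), b (Sum.inr (Sum.inr i))) := by
          intro i; rw [← ap_add]; rfl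
        rw [h1, Finset.sum_congr rfl (fun i _ => h2 i), Finset.sum_add_distrib]; abel }
  have hφ : Function.Surjective φ := by
    intro g
    obtain ⟨ζ, _, s, _, h⟩ := hit (fun _ => 0) g
    refine ⟨Sum.elim s (Sum.elim (fun i => (ζ i).1) (fun i => (ζ i).2)), ?_⟩
    change w s + ∑ i, ap (x i) (ζ i) = g
    rw [h]; simp
  have hdet := PM_det N M s
  have hdet0 : 0 < (PM N M s).det := by rw [hdet]; positivity
  have e : (Fin N ⊕ (Fin M ⊕ Fin M)) ≃ Fin n := Fintype.equivFinOfCardEq (by simp; omega)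
  set R := √((√N / 2 + ρ) ^ 2 + 4 / 3 * s ^ 2 * M) with hR
  have hR2 : R ^ 2 = (√N / 2 + ρ) ^ 2 + 4 / 3 * s ^ 2 * M := Real.sq_sqrt (by positivity)
  have := partA e φ hφ (PM N M s) hdet0.ne' R (by positivity) ?_
  · rwa [abs_of_pos hdet0, hdet] at this
  intro y
  let v : Fin M → ℝ := fun i => 2 * y (Sum.inr (Sum.inr i)) / (s * √3)
  let u : Fin M → ℝ := fun i => y (Sum.inr (Sum.inl i)) / s - v i / 2
  choose z0 τ hzτ using fun i => hex_cover (u i) (v i)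
  let t : Fin N → ℤ := fun i => round (y (Sum.inl i))
  obtain ⟨ζ, hζ, s', hs', hw⟩ := hit τ (- w t - ∑ i, ap (x i) (z0 i))
  refine ⟨Sum.elim (t + s') (Sum.elim (fun i => (z0 i).1 + (ζ i).1) (fun i => (z0 i).2 + (ζ i).2)), ?_, ?_⟩
  · change w (t + s') + ∑ i, ap (x i) (z0 i + ζ i) = 0
    simp_rw [ap_add]
    rw [map_add, hw, Finset.sum_add_distrib]; abel
  · rw [hR2, Fintype.sum_sum_type, Fintype.sum_sum_type, ← Finset.sum_add_distrib]
    have part1 : ∑ i, (y (Sum.inl i) - (PM N M s).mulVec (fun j => ((Sum.elim (t + s') (Sum.elim (fun i => (z0 i).1 + (ζ i).1) (fun i => (z0 i).2 + (ζ i).2)) : _ → ℤ) j : ℝ)) (Sum.inl i)) ^ 2 ≤ (√N / 2 + ρ) ^ 2 := by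
      have : ∀ i, (PM N M s).mulVec (fun j => ((Sum.elim (t + s') (Sum.elim (fun i => (z0 i).1 + (ζ i).1) (fun i => (z0 i).2 + (ζ i).2)) : _ → ℤ) j : ℝ)) (Sum.inl i) = t i + s' i := by
        intro i
        simp [PM, Matrix.mulVec, dotProduct, Matrix.one_apply]
      simp_rw [this]
      have := tri_sum (fun i => y (Sum.inl i) - t i) (fun i => (s' i : ℝ)) (√N / 2) ρ (by positivity) hρ ?_ (hS s' hs')
      · refine le_trans (le_of_eq ?_) this
        refine Finset.sum_congr rfl fun i _ => by ring
      · have hb : ∀ i ∈ (univ : Finset (Fin N)), (y (Sum.inl i) - t i) ^ 2 ≤ 1 / 4 := by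
          intro i _
          have := abs_sub_round (y (Sum.inl i))
          rw [← sq_abs]
          have h0 := abs_nonneg (y (Sum.inl i) - round (y (Sum.inl i)))
          simp only [t]
          nlinarith
        refine (Finset.sum_le_card_nsmul _ _ _ hb).trans ?_
        rw [Finset.card_univ, Fintype.card_fin, nsmul_eq_mul, div_pow, Real.sq_sqrt (by positivity)]
        linarith
    refine add_le_add part1 ?_
    have part2 : ∀ i ∈ (univ : Finset (Fin M)), (y (Sum.inr (Sum.inl i)) - (PM N M s).mulVec (fun j => ((Sum.elim (t + s') (Sum.elim (fun i => (z0 i).1 + (ζ i).1) (fun i => (z0 i).2 + (ζ i).2)) : _ → ℤ) j : ℝ)) (Sum.inr (Sum.inl i))) ^ 2 + (y (Sum.inr (Sum.inr i)) - (PM N M s).mulVec (fun j => ((Sum.elim (t + s') (Sum.elim (fun i => (z0 i).1 + (ζ i).1) (fun i => (z0 i).2 + (ζ i).2)) : _ → ℤ) j : ℝ)) (Sum.inr (Sum.inr i))) ^ 2 ≤ 4 / 3 * s ^ 2 := by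
      intro i _
      have e1 : (PM N M s).mulVec (fun j => ((Sum.elim (t + s') (Sum.elim (fun i => (z0 i).1 + (ζ i).1) (fun i => (z0 i).2 + (ζ i).2)) : _ → ℤ) j : ℝ)) (Sum.inr (Sum.inl i)) = s * ((z0 i).1 + (ζ i).1) + s / 2 * ((z0 i).2 + (ζ i).2) := by
        simp [PM, Matrix.mulVec, dotProduct, Matrix.one_apply]
      have e2 : (PM N M s).mulVec (fun j => ((Sum.elim (t + s') (Sum.elim (fun i => (z0 i).1 + (ζ i).1) (fun i => (z0 i).2 + (ζ i).2)) : _ → ℤ) j : ℝ)) (Sum.inr (Sum.inr i)) = s * √3 / 2 * ((z0 i).2 + (ζ i).2) := by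
        simp [PM, Matrix.mulVec, dotProduct, Matrix.one_apply]
      rw [e1, e2]
      have hy2 : y (Sum.inr (Sum.inr i)) = s * √3 / 2 * v i := by
        simp only [v]; field_simp
      have hy1 : y (Sum.inr (Sum.inl i)) = s * u i + s / 2 * v i := by
        simp only [u]; field_simp; ring
      rw [hy1, hy2]
      have := hzτ i (ζ i) (hζ i)
      simp only [QQ] at this
      push_cast at this
      calc _ = s ^ 2 * ((u i - ((z0 i).1 + (ζ i).1)) ^ 2 + (u i - ((z0 i).1 + (ζ i).1)) * (v i - ((z0 i).2 + (ζ i).2)) + (1 / 4 + √3 ^ 2 / 4) * (v i - ((z0 i).2 + (ζ i).2)) ^ 2) := by ring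
        _ = s ^ 2 * ((u i - ((z0 i).1 + (ζ i).1)) ^ 2 + (u i - ((z0 i).1 + (ζ i).1)) * (v i - ((z0 i).2 + (ζ i).2)) + (v i - ((z0 i).2 + (ζ i).2)) ^ 2) := by rw [h33]; ring
        _ ≤ s ^ 2 * (4 / 3) := by gcongr
        _ = _ := by ring
    refine (Finset.sum_le_card_nsmul _ _ _ part2).trans ?_
    rw [Finset.card_univ, Fintype.card_fin, nsmul_eq_mul]
    linarith
end PartB

section PartBB
open Finset

def red (q : ℕ) {N : ℕ} (s : Fin N → ℤ) : Fin N → ZMod q := fun i => (s i : ZMod q)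

theorem combine (q : ℕ) [Fact q.Prime] (N M n k v : ℕ) (hn : N + 2 * M = n) (hv : 0 < v)
    (S : Finset (Fin N → ℤ)) (ρ : ℝ) (hρ : 0 ≤ ρ)
    (hS : ∀ s ∈ S, ∑ i, (s i : ℝ) ^ 2 ≤ ρ ^ 2) (hinj : Set.InjOn (red q) (S : Set (Fin N → ℤ)))
    (η : ℝ) (hη : 0 ≤ η) (hR : RelHyp (S.image (red q)) η (8*v)) (hcard : S.card = v * q ^ k)
    (hη2 : η ≤ Real.exp (-(5*v))) (hG : 20 * v * Real.exp (2*v) ≤ (q:ℝ) ^ k)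
    (K : ℝ) (hc : 2 * 3 ^ M < K) (hs : (K * (4 * Real.exp (-v))) ^ (4 ^ M) * (q:ℝ) ^ k < K)
    (s : ℝ) (hs0 : 0 < s) :
    ∃ b : Fin n → EuclideanSpace ℝ (Fin n),
      IsLatticeCovering b (√((√N / 2 + ρ) ^ 2 + 4 / 3 * s ^ 2 * M)) ∧
      latticeDet b = (q:ℝ) ^ k * (s ^ 2 * √3 / 2) ^ M := by
  classical
  have hGc : Fintype.card (Fin k → ZMod q) = q ^ k := by
    rw [Fintype.card_fun, ZMod.card, Fintype.card_fin]
  have hGc' : (Fintype.card (Fin k → ZMod q) : ℝ) = (q:ℝ) ^ k := by rw [hGc]; push_cast; rfl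
  obtain ⟨W, hW⟩ := partD_final (F := ZMod q) (G := Fin k → ZMod q) (S.image (red q)) η hη v hv hR
    (by rw [Finset.card_image_of_injOn hinj, hcard, hGc]) hη2 (by rw [hGc']; exact hG)
  obtain ⟨x, hx⟩ := partC M _ (4 * Real.exp (-v)) K (by positivity) hW hc (by rw [hGc']; exact hs)
  let w : (Fin N → ℤ) →+ (Fin k → ZMod q) :=
    { toFun := fun s => evv W (red q s)
      map_zero' := by simp [evv, red]
      map_add' := by intro a b; simp [evv, red, add_smul, Finset.sum_add_distrib] }
  have := partB N M n hn w S ρ hρ hS x ?_ s hs0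
  · rwa [hGc'] at this
  intro τ g
  obtain ⟨ζ, hζ, h⟩ := hx τ g
  refine ⟨ζ, hζ, ?_⟩
  simp only [mem_filter, mem_univ, true_and, not_forall, not_not, mem_image] at h
  obtain ⟨_, ⟨s, hs, rfl⟩, h⟩ := h
  exact ⟨s, hs, h⟩
end PartBB

section PartE1
open Finset
variable (q : ℕ) [Fact q.Prime]

def gw (b : ℕ) (y : ZMod q) : ℝ :=
  (4:ℝ)⁻¹ ^ b * ∑ t ∈ range (2*b+1), ((2*b).choose t : ℝ) * (if ((t:ZMod q) - (b:ZMod q)) = y then 1 else 0)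

def cw (ξ : ZMod q) : ℝ := (1 + (ZMod.stdAddChar ξ : ℂ).re) / 2

theorem gw_nonneg (b : ℕ) (y : ZMod q) : 0 ≤ gw q b y := by
  unfold gw
  refine mul_nonneg (by positivity) (sum_nonneg fun t _ => ?_)
  split_ifs <;> positivity

theorem std_norm (ξ : ZMod q) : ‖(ZMod.stdAddChar ξ : ℂ)‖ = 1 := by
  rw [ZMod.stdAddChar_apply]; exact Circle.norm_coe _

theorem cw_nonneg (ξ : ZMod q) : 0 ≤ cw q ξ := by
  unfold cw
  have := Complex.abs_re_le_norm (ZMod.stdAddChar ξ : ℂ)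
  rw [std_norm] at this
  have := abs_le.1 this
  linarith [this.1]

theorem cw_pow (b : ℕ) (ξ : ZMod q) :
    ((cw q ξ ^ b : ℝ) : ℂ) = (4:ℂ)⁻¹ ^ b * ∑ t ∈ range (2*b+1), ((2*b).choose t : ℂ) *
      ZMod.stdAddChar (ξ * ((t:ZMod q) - (b:ZMod q))) := by
  set z : ℂ := ZMod.stdAddChar ξ with hz
  have hz0 : z ≠ 0 := by
    intro h; have := std_norm q ξ; rw [← hz, h] at this; simp at this
  have h1 : ∀ t : ℕ, (ZMod.stdAddChar (ξ * ((t:ZMod q) - (b:ZMod q))) : ℂ) = z ^ t * (z⁻¹)^b := by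
    intro t
    have : ξ * ((t:ZMod q) - (b:ZMod q)) = t • ξ + -(b • ξ) := by
      simp only [nsmul_eq_mul]; ring
    rw [this, AddChar.map_add_eq_mul, AddChar.map_neg_eq_inv, AddChar.map_nsmul_eq_pow,
      AddChar.map_nsmul_eq_pow, inv_pow]
  have h2 : ∑ t ∈ range (2*b+1), ((2*b).choose t : ℂ) *
      ZMod.stdAddChar (ξ * ((t:ZMod q) - (b:ZMod q))) = (z + 1)^(2*b) * (z⁻¹)^b := by
    rw [add_pow, Finset.sum_mul]
    refine sum_congr rfl fun t _ => ?_
    rw [h1]; ring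
  rw [h2]
  have h3 : z⁻¹ = (starRingEnd ℂ) z := by
    rw [Complex.inv_def, Complex.normSq_eq_norm_sq, hz, std_norm]; simp
  have h4 : ((cw q ξ : ℝ) : ℂ) = 4⁻¹ * (z+1)^2 * z⁻¹ := by
    have h5 : (z+1)^2 * z⁻¹ = z + z⁻¹ + 2 := by field_simp; ring
    rw [mul_assoc, h5, h3, Complex.add_conj]
    unfold cw
    push_cast
    ring
  push_cast
  rw [h4, mul_pow, mul_pow, pow_mul]
  ring

theorem gw_inv (b : ℕ) (y : ZMod q) :
    (q : ℂ) * (gw q b y : ℂ) = ∑ ξ : ZMod q, ((cw q ξ ^ b : ℝ) : ℂ) * ZMod.stdAddChar (ξ * (-y)) := by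
  simp_rw [cw_pow]
  simp_rw [mul_assoc, Finset.sum_mul]
  rw [← Finset.mul_sum, Finset.sum_comm]
  unfold gw
  push_cast
  rw [mul_left_comm, Finset.mul_sum]
  congr 1
  refine sum_congr rfl fun t _ => ?_
  have : ∀ ξ : ZMod q, ((2*b).choose t : ℂ) * ZMod.stdAddChar (ξ * ((t:ZMod q) - (b:ZMod q))) *
      ZMod.stdAddChar (ξ * (-y)) = ((2*b).choose t : ℂ) * ZMod.stdAddChar (ξ * ((t:ZMod q) - (b:ZMod q) - y)) := by
    intro ξ
    rw [mul_assoc, ← AddChar.map_add_eq_mul]; congr 2; ring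
  simp_rw [this]
  rw [← Finset.mul_sum, AddChar.sum_mulShift _ (ZMod.isPrimitive_stdAddChar q), ZMod.card]
  simp only [sub_eq_zero (b := y)]
  split_ifs <;> simp; ring

theorem gw_fwd (b : ℕ) (ξ : ZMod q) :
    ∑ x : ZMod q, (gw q b x : ℂ) * ZMod.stdAddChar (ξ * x) = ((cw q ξ ^ b : ℝ) : ℂ) := by
  rw [cw_pow]
  unfold gw
  push_cast
  simp only [mul_assoc]
  rw [← Finset.mul_sum]
  simp only [Finset.sum_mul]
  rw [Finset.sum_comm]
  congr 1
  refine sum_congr rfl fun t _ => ?_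
  rw [Finset.sum_eq_single ((t:ZMod q) - (b:ZMod q))]
  · rw [if_pos rfl]; push_cast; ring
  · intro x _ hx
    rw [if_neg (Ne.symm hx)]; push_cast; ring
  · intro h; exact absurd (mem_univ _) h

theorem pmu_eq (b : ℕ) (κ : Type) [Fintype κ] [DecidableEq κ] (μ : κ → ZMod q) :
    (q:ℝ) * ∑ x : κ → ZMod q, (∏ t, gw q b (x t)) * gw q b (∑ t, μ t * x t)
      = ∑ ξ : ZMod q, cw q ξ ^ b * ∏ t, cw q (ξ * (-μ t)) ^ b := by
  rw [← Complex.ofReal_inj]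
  push_cast
  rw [Finset.mul_sum]
  have e1 : ∀ x : κ → ZMod q, (q:ℂ) * ((∏ t, (gw q b (x t) : ℂ)) * (gw q b (∑ t, μ t * x t) : ℂ))
      = ∑ ξ : ZMod q, ((cw q ξ ^ b : ℝ) : ℂ) * ∏ t, ((gw q b (x t) : ℂ) * ZMod.stdAddChar (ξ * (-μ t) * x t)) := by
    intro x
    rw [mul_left_comm, gw_inv, Finset.mul_sum]
    refine sum_congr rfl fun ξ _ => ?_
    rw [prod_mul_distrib, mul_left_comm]
    congr 2
    have : ξ * (-∑ t, μ t * x t) = ∑ t, ξ * (-μ t) * x t := by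
      rw [← Finset.sum_neg_distrib, Finset.mul_sum]
      refine sum_congr rfl fun t _ => by ring
    rw [this]
    exact map_prod (AddChar.toMonoidHom (ZMod.stdAddChar : AddChar (ZMod q) ℂ)) (fun t => Multiplicative.ofAdd (ξ * (-μ t) * x t)) univ
  rw [sum_congr rfl (fun x _ => e1 x), sum_comm]
  refine sum_congr rfl fun ξ _ => ?_
  rw [← Finset.mul_sum]
  push_cast
  congr 1
  rw [← Fintype.prod_sum (fun t x => (gw q b x : ℂ) * ZMod.stdAddChar (ξ * (-μ t) * x))]
  refine prod_congr rfl fun t _ => ?_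
  rw [gw_fwd]; push_cast; rfl

theorem gw_zero (B : ℕ) (hB : B < q) : gw q B 0 = (4:ℝ)⁻¹^B * (2*B).choose B := by
  unfold gw
  congr 1
  rw [Finset.sum_eq_single B]
  · simp
  · intro t ht htB
    rw [if_neg, mul_zero]
    rw [sub_eq_zero]
    intro h
    rw [ZMod.natCast_eq_natCast_iff, Nat.modEq_iff_dvd] at h
    rw [mem_range] at ht
    have := Int.eq_zero_of_abs_lt_dvd h (by rw [abs_lt]; constructor <;> omega)
    omega
  · intro h; exfalso; apply h; rw [mem_range]; omega

theorem sum_cw_pow (B : ℕ) (hB : B < q) : ∑ ξ : ZMod q, cw q ξ ^ B = q * ((4:ℝ)⁻¹^B * (2*B).choose B) := by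
  rw [← gw_zero q B hB, ← Complex.ofReal_inj]
  push_cast
  rw [gw_inv]
  simp

theorem amgm {O : Type} [Fintype O] [Nonempty O] (a : O → ℝ) (ha : ∀ o, 0 ≤ a o) :
    ∏ o, a o ≤ ∑ o, (1/(Fintype.card O : ℝ)) * a o ^ (Fintype.card O) := by
  have hc : (Fintype.card O : ℝ) ≠ 0 := by exact_mod_cast Fintype.card_ne_zero
  have := Real.geom_mean_le_arith_mean_weighted univ (fun _ : O => 1/(Fintype.card O : ℝ))
    (fun o => a o ^ Fintype.card O) (fun _ _ => by positivity) (by simp [hc])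
    (fun o _ => pow_nonneg (ha o) _)
  refine le_trans (le_of_eq ?_) this
  refine prod_congr rfl fun o _ => ?_
  rw [one_div, Real.pow_rpow_inv_natCast (ha o) Fintype.card_ne_zero]

theorem pmu_le (b : ℕ) (κ : Type) [Fintype κ] [DecidableEq κ] (μ : κ → ZMod q) (hμ : ∀ t, μ t ≠ 0)
    (hB : b * (Fintype.card κ + 1) < q) :
    ∑ x : κ → ZMod q, (∏ t, gw q b (x t)) * gw q b (∑ t, μ t * x t)
      ≤ (4:ℝ)⁻¹^(b * (Fintype.card κ + 1)) * (2*(b * (Fintype.card κ + 1))).choose (b * (Fintype.card κ + 1)) := by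
  have hq : (0:ℝ) < q := by exact_mod_cast (Fact.out : q.Prime).pos
  refine le_of_mul_le_mul_left ?_ hq
  rw [pmu_eq, ← sum_cw_pow q _ hB]
  set ν : Option κ → ZMod q := fun o => o.elim 1 (fun t => -μ t) with hν
  have hν0 : ∀ o, ν o ≠ 0 := by
    intro o; cases o with
    | none => simp [hν]
    | some t => simpa [hν] using hμ t
  have e1 : ∀ ξ : ZMod q, cw q ξ ^ b * ∏ t, cw q (ξ * (-μ t)) ^ b = ∏ o, cw q (ξ * ν o) ^ b := by
    intro ξ
    rw [Fintype.prod_option]; simp [hν]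
  have hcard : Fintype.card (Option κ) = Fintype.card κ + 1 := Fintype.card_option
  calc _ = ∑ ξ : ZMod q, ∏ o, cw q (ξ * ν o) ^ b := sum_congr rfl fun ξ _ => e1 ξ
    _ ≤ ∑ ξ : ZMod q, ∑ o, (1/(Fintype.card (Option κ) : ℝ)) * (cw q (ξ * ν o) ^ b) ^ (Fintype.card (Option κ)) :=
        sum_le_sum fun ξ _ => amgm _ fun o => pow_nonneg (cw_nonneg q _) _
    _ = ∑ o : Option κ, (1/(Fintype.card (Option κ) : ℝ)) * ∑ ξ : ZMod q, cw q ξ ^ (b * (Fintype.card κ + 1)) := by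
        rw [sum_comm]
        refine sum_congr rfl fun o _ => ?_
        rw [← Finset.mul_sum]
        congr 1
        rw [← Equiv.sum_comp (Equiv.mulRight₀ (ν o) (hν0 o)) (fun ξ => cw q ξ ^ (b * (Fintype.card κ + 1)))]
        refine sum_congr rfl fun ξ _ => ?_
        rw [← pow_mul, hcard]; rfl
    _ = _ := by
        rw [sum_const, card_univ, nsmul_eq_mul, ← mul_assoc, mul_one_div_cancel, one_mul]
        rw [hcard]; positivity

end PartE1

section PartE2
open Finset

theorem rel_count (q : ℕ) [Fact q.Prime] (N b : ℕ) (S : Finset (Fin N → ZMod q)) (A : ℝ) (hA : 0 ≤ A)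
    (hS : ∀ s ∈ S, 1 ≤ A * ∏ c, gw q b (s c))
    (κ : Type) [Fintype κ] [DecidableEq κ] (μ : κ → ZMod q) (hμ : ∀ t, μ t ≠ 0)
    (hB : b * (Fintype.card κ + 1) < q) :
    ((univ.filter fun f : κ → Fin N → ZMod q => (∀ t, f t ∈ S) ∧ ∑ t, μ t • f t ∈ S).card : ℝ)
      ≤ A ^ (Fintype.card κ + 1) *
        ((4:ℝ)⁻¹^(b * (Fintype.card κ + 1)) * (2*(b * (Fintype.card κ + 1))).choose (b * (Fintype.card κ + 1))) ^ N := by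
  set h : (κ → ZMod q) → ℝ := fun x => (∏ t, gw q b (x t)) * gw q b (∑ t, μ t * x t) with hh
  have hh0 : ∀ x, 0 ≤ h x := fun x => mul_nonneg (prod_nonneg fun t _ => gw_nonneg q b _) (gw_nonneg q b _)
  calc ((univ.filter fun f : κ → Fin N → ZMod q => (∀ t, f t ∈ S) ∧ ∑ t, μ t • f t ∈ S).card : ℝ)
      = ∑ f ∈ univ.filter (fun f : κ → Fin N → ZMod q => (∀ t, f t ∈ S) ∧ ∑ t, μ t • f t ∈ S), (1:ℝ) := by simp
    _ ≤ ∑ f ∈ univ.filter (fun f : κ → Fin N → ZMod q => (∀ t, f t ∈ S) ∧ ∑ t, μ t • f t ∈ S),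
          A ^ (Fintype.card κ + 1) * ∏ c, h (fun t => f t c) := by
        refine sum_le_sum fun f hf => ?_
        rw [mem_filter] at hf
        have h1 : ∏ c, h (fun t => f t c) = (∏ t, ∏ c, gw q b (f t c)) * ∏ c, gw q b ((∑ t, μ t • f t) c) := by
          simp only [hh]
          rw [prod_mul_distrib, prod_comm]
          congr 1
          refine prod_congr rfl fun c _ => ?_
          simp [Finset.sum_apply]
        rw [h1, pow_succ]
        have h2 : A ^ Fintype.card κ = ∏ t : κ, A := by simp
        rw [h2, mul_mul_mul_comm, ← prod_mul_distrib]
        have h3 : (1:ℝ) ≤ ∏ t, (A * ∏ c, gw q b (f t c)) :=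
          Finset.one_le_prod fun t _ => hS _ (hf.2.1 t)
        exact one_le_mul_of_one_le_of_one_le h3 (hS _ hf.2.2)
    _ ≤ ∑ f : κ → Fin N → ZMod q, A ^ (Fintype.card κ + 1) * ∏ c, h (fun t => f t c) := by
        refine sum_le_sum_of_subset_of_nonneg (filter_subset _ _) fun f _ _ => ?_
        exact mul_nonneg (pow_nonneg hA _) (prod_nonneg fun c _ => hh0 _)
    _ = A ^ (Fintype.card κ + 1) * (∑ x, h x) ^ N := by
        rw [← Finset.mul_sum, Fintype.sum_pow h N]
        congr 1
        exact Fintype.sum_equiv (Equiv.piComm (fun (_:κ) (_:Fin N) => ZMod q)) _ _ (fun f => rfl)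
    _ ≤ _ := by
        refine mul_le_mul_of_nonneg_left ?_ (pow_nonneg hA _)
        exact pow_le_pow_left₀ (sum_nonneg fun x _ => hh0 x) (pmu_le q b κ μ hμ hB) N

end PartE2

section PartE3
open Finset

def cb (B : ℕ) : ℝ := (4:ℝ)⁻¹^B * (2*B).choose B

theorem cb_pos (B : ℕ) : 0 < cb B := by
  unfold cb
  have : 0 < (2*B).choose B := Nat.choose_pos (by omega)
  positivity

theorem cb_sq (B : ℕ) : cb B ^ 2 * (Real.Wallis.W B * (2*B+1)) = 1 := by
  rw [Real.Wallis.W_eq_factorial_ratio]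
  unfold cb
  have h : ((2*B).choose B : ℝ) = (2*B).factorial / ((B.factorial:ℝ) * B.factorial) := by
    rw [Nat.choose_eq_factorial_div_factorial (by omega), Nat.cast_div]
    · rw [show 2*B - B = B by omega]; push_cast; rfl
    · exact Nat.factorial_mul_factorial_dvd_factorial (by omega)
    · have := Nat.factorial_pos B; have := Nat.factorial_pos (2*B-B); positivity
  rw [h]
  have h1 : (B.factorial:ℝ) ≠ 0 := by exact_mod_cast Nat.factorial_ne_zero _
  have h2 : ((2*B).factorial:ℝ) ≠ 0 := by exact_mod_cast Nat.factorial_ne_zero _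
  have h3 : (2*(B:ℝ)+1) ≠ 0 := by positivity
  have h4 : (2:ℝ)^(4*B) = (4^B)^2 := by rw [← pow_mul, show (4:ℝ) = 2^2 by norm_num, ← pow_mul]; congr 1; ring
  rw [h4, inv_pow]
  field_simp

theorem cb_le (B : ℕ) (hB : 0 < B) : cb B ^ 2 ≤ 1 / (Real.pi * B) := by
  have h1 := cb_sq B
  have h2 := Real.Wallis.le_W B
  have hB' : (0:ℝ) < B := by exact_mod_cast hB
  have hp := Real.pi_pos
  rw [le_div_iff₀ (by positivity), ← h1]
  refine mul_le_mul_of_nonneg_left ?_ (by positivity)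
  have h3 : Real.pi * B ≤ ((2 : ℝ) * B + 1) / (2 * B + 2) * (Real.pi / 2) * (2*B+1) := by
    rw [div_mul_eq_mul_div, div_mul_eq_mul_div, le_div_iff₀ (by positivity)]
    nlinarith
  refine h3.trans ?_
  exact mul_le_mul_of_nonneg_right h2 (by positivity)

theorem le_cb (B : ℕ) : 1 / (Real.pi * (B+1/2)) ≤ cb B ^ 2 := by
  have h1 := cb_sq B
  have h2 := Real.Wallis.W_le B
  have hp := Real.pi_pos
  rw [div_le_iff₀ (by positivity), ← h1]
  refine mul_le_mul_of_nonneg_left ?_ (by positivity)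
  nlinarith

theorem one_sub_ge (y : ℝ) (h0 : 0 ≤ y) (h1 : y ≤ 1/2) : Real.exp (-(y+y^2)) ≤ 1 - y := by
  rw [Real.exp_neg]
  apply inv_le_of_inv_le₀ (by linarith)
  have := Real.quadratic_le_exp_of_nonneg (x := y + y^2) (by positivity)
  refine le_trans ?_ this
  rw [inv_le_iff_one_le_mul₀ (by linarith)]
  have h3 : 0 ≤ y^2 := by positivity
  have h4 : 0 ≤ y^3 := by positivity
  have h5 : 0 ≤ y^2 * (1/2 - y) := mul_nonneg h3 (by linarith)
  have h6 : 0 ≤ y^3 * (1/2 - y) := mul_nonneg h4 (by linarith)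
  have h7 : 0 ≤ y^4 * (1/2 - y) := mul_nonneg (by positivity) (by linarith)
  nlinarith

theorem choose_ge (b s : ℕ) (hs : 4 * s ≤ b) :
    ((2*b).choose b : ℝ) * Real.exp (-((s:ℝ)^2/b + 2*(s:ℝ)^3/(b:ℝ)^2)) ≤ ((2*b).choose (b+s) : ℝ) := by
  induction s with
  | zero => simp
  | succ s ih =>
    have hb : (0:ℝ) < b := by have : 0 < b := by omega
                              exact_mod_cast this
    have ih' := ih (by omega)
    have e : ((2*b).choose (b+(s+1)) : ℝ) * (b+s+1) = (2*b).choose (b+s) * (b - s) := by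
      have := Nat.choose_succ_right_eq (2*b) (b+s)
      rw [show 2*b-(b+s) = b - s by omega] at this
      have h2 : (((b - s : ℕ)):ℝ) = (b:ℝ) - s := by rw [Nat.cast_sub (by omega)]
      rw [← h2, ← add_assoc]
      exact_mod_cast this
    have hy1 : (2*(s:ℝ)+1)/b ≤ 1/2 := by
      rw [div_le_iff₀ hb]
      have : (4:ℝ)*((s+1:ℕ):ℝ) ≤ b := by exact_mod_cast hs
      push_cast at this
      linarith
    have h3 := one_sub_ge ((2*(s:ℝ)+1)/b) (by positivity) hy1
    have h4 : 1 - (2*(s:ℝ)+1)/b ≤ (b - s)/(b+s+1) := by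
      rw [le_div_iff₀ (by positivity), sub_mul, one_mul]
      have : (2*(s:ℝ)+1) ≤ (2*(s:ℝ)+1)/b * (b+s+1) := by
        rw [div_mul_eq_mul_div, le_div_iff₀ hb]
        refine mul_le_mul_of_nonneg_left (by linarith [Nat.cast_nonneg (α := ℝ) s]) (by positivity)
      linarith
    have e2 : ((2*b).choose (b+(s+1)) : ℝ) = (2*b).choose (b+s) * ((b - s)/(b+s+1)) := by
      rw [← mul_div_assoc, ← e, mul_div_cancel_right₀]; positivity
    rw [e2]
    have h5 : Real.exp (-(((s+1:ℕ):ℝ)^2/b + 2*((s+1:ℕ):ℝ)^3/(b:ℝ)^2)) ≤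
        Real.exp (-((s:ℝ)^2/b + 2*(s:ℝ)^3/(b:ℝ)^2)) * Real.exp (-((2*(s:ℝ)+1)/b+((2*(s:ℝ)+1)/b)^2)) := by
      rw [← Real.exp_add]
      apply Real.exp_le_exp.2
      push_cast
      have : 0 ≤ (2*(s:ℝ)^2+2*s+1)/(b:ℝ)^2 := by positivity
      have e3 : -((s:ℝ)^2/b + 2*(s:ℝ)^3/(b:ℝ)^2) + -((2*(s:ℝ)+1)/b+((2*(s:ℝ)+1)/b)^2) -
        (-(((s:ℝ)+1)^2/b + 2*((s:ℝ)+1)^3/(b:ℝ)^2)) = (2*(s:ℝ)^2+2*s+1)/(b:ℝ)^2 := by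
        field_simp; ring
      linarith
    calc _ ≤ ((2*b).choose b : ℝ) * (Real.exp (-((s:ℝ)^2/b + 2*(s:ℝ)^3/(b:ℝ)^2)) * Real.exp (-((2*(s:ℝ)+1)/b+((2*(s:ℝ)+1)/b)^2))) :=
          mul_le_mul_of_nonneg_left h5 (by positivity)
      _ = (((2*b).choose b : ℝ) * (Real.exp (-((s:ℝ)^2/b + 2*(s:ℝ)^3/(b:ℝ)^2)))) * Real.exp (-((2*(s:ℝ)+1)/b+((2*(s:ℝ)+1)/b)^2)) := by ring
      _ ≤ _ := mul_le_mul ih' (h3.trans h4) (by positivity) (by positivity)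

theorem gw_ge (q : ℕ) [Fact q.Prime] (b : ℕ) (s : ℤ) (hs : 4 * s.natAbs ≤ b) :
    cb b * Real.exp (-((s.natAbs:ℝ)^2/b + 2*(s.natAbs:ℝ)^3/(b:ℝ)^2)) ≤ gw q b (s : ZMod q) := by
  have h1 := choose_ge b s.natAbs hs
  have h2 : (4:ℝ)⁻¹^b * ((2*b).choose (b+s.natAbs) : ℝ) ≤ gw q b (s : ZMod q) := by
    unfold gw
    refine mul_le_mul_of_nonneg_left ?_ (by positivity)
    obtain ⟨t, ht⟩ : ∃ t : ℕ, (t:ℤ) = b + s := ⟨((b:ℤ)+s).toNat, by omega⟩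
    have htm : t ∈ range (2*b+1) := by rw [mem_range]; omega
    refine le_trans (le_of_eq ?_) (single_le_sum (f := fun t : ℕ => ((2*b).choose t : ℝ) * (if ((t:ZMod q) - (b:ZMod q)) = (s:ZMod q) then 1 else 0)) (fun i _ => ?_) htm)
    · have : ((t:ZMod q) - (b:ZMod q)) = (s:ZMod q) := by
        have h3 : ((t:ℤ):ZMod q) = (((b:ℤ) + s : ℤ) : ZMod q) := by rw [ht]
        push_cast at h3
        rw [h3]; ring
      simp only [this, if_true, mul_one]
      rcases le_total 0 s with h | h
      · rw [show b + s.natAbs = t by omega]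
      · rw [← Nat.choose_symm (show t ≤ 2*b by rw [mem_range] at htm; omega), show b + s.natAbs = 2*b - t by omega]
    · split_ifs <;> positivity
  refine le_trans ?_ h2
  unfold cb
  rw [mul_assoc]
  exact mul_le_mul_of_nonneg_left h1 (by positivity)

theorem prod_gw_ge (q : ℕ) [Fact q.Prime] (N b : ℕ) (hb : 0 < b) (s : Fin N → ℤ) (ρ : ℝ) (hρ : 0 ≤ ρ)
    (hs : ∑ i, (s i : ℝ)^2 ≤ ρ^2) (hρb : 4 * ρ ≤ b) :
    cb b ^ N * Real.exp (-(ρ^2/b + 2*ρ^3/(b:ℝ)^2)) ≤ ∏ i, gw q b (s i : ZMod q) := by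
  have hb' : (0:ℝ) < b := by exact_mod_cast hb
  have habs : ∀ i, ((s i).natAbs : ℝ)^2 = (s i : ℝ)^2 := by
    intro i; rw [Nat.cast_natAbs]; push_cast; exact sq_abs _
  have h1 : ∀ i, ((s i).natAbs:ℝ) ≤ ρ := by
    intro i
    have : ((s i).natAbs : ℝ)^2 ≤ ρ^2 := by
      rw [habs]
      exact (single_le_sum (f := fun i => (s i : ℝ)^2) (fun j _ => sq_nonneg _) (mem_univ i)).trans hs
    exact le_of_sq_le_sq this hρ
  have h2 : ∀ i, 4 * (s i).natAbs ≤ b := by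
    intro i
    have : (4:ℝ) * ((s i).natAbs:ℝ) ≤ b := by linarith [h1 i]
    exact_mod_cast this
  have h3 : ∏ i, (cb b * Real.exp (-(((s i).natAbs:ℝ)^2/b + 2*((s i).natAbs:ℝ)^3/(b:ℝ)^2))) ≤ ∏ i, gw q b (s i : ZMod q) :=
    prod_le_prod (fun i _ => by have := cb_pos b; positivity) fun i _ => gw_ge q b (s i) (h2 i)
  refine le_trans ?_ h3
  rw [prod_mul_distrib, prod_const, card_univ, Fintype.card_fin, ← Real.exp_sum]
  refine mul_le_mul_of_nonneg_left (Real.exp_le_exp.2 ?_) (pow_nonneg (cb_pos b).le _)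
  rw [sum_neg_distrib, neg_le_neg_iff, sum_add_distrib, ← sum_div, ← sum_div, ← mul_sum]
  have h4 : ∑ i, ((s i).natAbs:ℝ)^2 ≤ ρ^2 := by simp_rw [habs]; exact hs
  have h5 : ∑ i, ((s i).natAbs:ℝ)^3 ≤ ρ^3 := by
    calc ∑ i, ((s i).natAbs:ℝ)^3 ≤ ∑ i, ρ * ((s i).natAbs:ℝ)^2 := by
          refine sum_le_sum fun i _ => ?_
          rw [pow_succ' _ 2]
          exact mul_le_mul_of_nonneg_right (h1 i) (by positivity)
      _ = ρ * ∑ i, ((s i).natAbs:ℝ)^2 := by rw [mul_sum]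
      _ ≤ ρ * ρ^2 := mul_le_mul_of_nonneg_left h4 hρ
      _ = ρ^3 := by ring
  gcongr

end PartE3

section PartF1
open Finset

theorem Gamma_ge (x : ℝ) (hx : 0 < x) : (x / Real.exp 1) ^ x ≤ Real.Gamma (x + 1) := by
  rw [Real.Gamma_eq_integral (by linarith)]
  have hint : IntegrableOn (fun t : ℝ => Real.exp (-t) * t ^ (x + 1 - 1)) (Set.Ioi 0) :=
    Real.GammaIntegral_convergent (by linarith)
  have h1 : ∫ t in Set.Ioi x, Real.exp (-t) * t ^ (x + 1 - 1) ≤ ∫ t in Set.Ioi 0, Real.exp (-t) * t ^ (x + 1 - 1) := by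
    refine setIntegral_mono_set hint ?_ (Set.Ioi_subset_Ioi hx.le).eventuallyLE
    refine (ae_restrict_iff' measurableSet_Ioi).2 (Filter.Eventually.of_forall fun t ht => ?_)
    have : (0:ℝ) < t := ht
    simp only [Pi.zero_apply]; positivity
  refine le_trans ?_ h1
  have h2 : ∫ t in Set.Ioi x, Real.exp (-t) * x ^ x ≤ ∫ t in Set.Ioi x, Real.exp (-t) * t ^ (x + 1 - 1) := by
    refine setIntegral_mono_on ?_ (hint.mono_set (Set.Ioi_subset_Ioi hx.le)) measurableSet_Ioi fun t ht => ?_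
    · exact (integrableOn_exp_neg_Ioi x).mul_const _
    · rw [add_sub_cancel_right]
      have : x < t := ht
      gcongr
  refine le_trans (le_of_eq ?_) h2
  rw [integral_mul_const, integral_exp_neg_Ioi, Real.div_rpow hx.le (Real.exp_pos 1).le, Real.exp_one_rpow, Real.exp_neg]
  field_simp

theorem Gamma_le (x : ℝ) (hx : 0 < x) : Real.Gamma (x + 1) ≤ (x+1) * Real.exp 1 * (x / Real.exp 1) ^ x := by
  rw [Real.Gamma_eq_integral (by linarith)]
  have hint : IntegrableOn (fun t : ℝ => Real.exp (-t) * t ^ (x + 1 - 1)) (Set.Ioi 0) :=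
    Real.GammaIntegral_convergent (by linarith)
  set d : ℝ := 1/(x+1) with hd
  have hd0 : 0 < d := by positivity
  have hd1 : 1 - d = x/(x+1) := by rw [hd]; field_simp; ring
  set c : ℝ := ((x+1) / Real.exp 1) ^ x with hc
  have key : ∀ t ∈ Set.Ioi (0:ℝ), Real.exp (-t) * t ^ (x + 1 - 1) ≤ Real.exp (-d * t) * c := by
    intro t ht
    have ht : 0 < t := ht
    rw [add_sub_cancel_right]
    have h3 : t/(x+1) ≤ Real.exp (t/(x+1) - 1) := by
      have := Real.add_one_le_exp (t/(x+1) - 1); linarith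
    have h4 : t ≤ (x+1)/Real.exp 1 * Real.exp (t/(x+1)) := by
      rw [Real.exp_sub, div_le_iff₀ (by positivity)] at h3
      calc t ≤ _ := h3
        _ = _ := by ring
    have h5 : t ^ x ≤ c * Real.exp (t/(x+1) * x) := by
      calc t^x ≤ ((x+1)/Real.exp 1 * Real.exp (t/(x+1)))^x := Real.rpow_le_rpow ht.le h4 hx.le
        _ = _ := by
          rw [Real.mul_rpow (by positivity) (by positivity), ← Real.exp_mul]
    calc Real.exp (-t) * t^x ≤ Real.exp (-t) * (c * Real.exp (t/(x+1)*x)) := by gcongr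
      _ = (Real.exp (-t) * Real.exp (t/(x+1)*x)) * c := by ring
      _ = _ := by
        rw [← Real.exp_add]
        congr 2
        rw [hd]; field_simp; ring
  have h6 : ∫ t in Set.Ioi 0, Real.exp (-t) * t ^ (x + 1 - 1) ≤ ∫ t in Set.Ioi 0, Real.exp (-d*t) * c := by
    refine setIntegral_mono_on hint ?_ measurableSet_Ioi key
    exact (exp_neg_integrableOn_Ioi 0 hd0).mul_const c
  refine h6.trans ?_
  have h7 : ∫ t in Set.Ioi (0:ℝ), Real.exp (-d*t) = x + 1 := by
    have := integral_exp_mul_Ioi (a := -d) (by linarith) 0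
    rw [this, hd]; simp
  rw [integral_mul_const, h7, mul_assoc]
  refine mul_le_mul_of_nonneg_left ?_ (by positivity)
  have h8 : c = (1+1/x)^x * (x/Real.exp 1)^x := by
    rw [← Real.mul_rpow (by positivity) (by positivity), hc]; congr 1; field_simp
  rw [h8]
  refine mul_le_mul_of_nonneg_right ?_ (by positivity)
  calc (1+1/x)^x ≤ (Real.exp (1/x))^x := Real.rpow_le_rpow (by positivity) (by linarith [Real.add_one_le_exp (1/x)]) hx.le
    _ = Real.exp 1 := by rw [← Real.exp_mul]; congr 1; field_simp

def kap (N : ℕ) : ℝ := √Real.pi ^ N / Real.Gamma ((N:ℝ)/2 + 1)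

theorem kap_pos (N : ℕ) : 0 < kap N := by
  unfold kap
  have : 0 < Real.Gamma ((N:ℝ)/2 + 1) := Real.Gamma_pos_of_pos (by positivity)
  have := Real.pi_pos
  positivity

theorem sqrt_half (N : ℕ) (hN : 0 < N) :
    √Real.pi ^ N = √(2 * Real.pi * Real.exp 1 / N) ^ N * (((N:ℝ)/2) / Real.exp 1) ^ ((N:ℝ)/2) := by
  have hN' : (0:ℝ) < N := by exact_mod_cast hN
  have hp := Real.pi_pos
  have h1 : (((N:ℝ)/2) / Real.exp 1) ^ ((N:ℝ)/2) = √(((N:ℝ)/2) / Real.exp 1) ^ N := by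
    rw [Real.sqrt_eq_rpow, ← Real.rpow_natCast, ← Real.rpow_mul (by positivity)]; congr 1; ring
  rw [h1, ← mul_pow, ← Real.sqrt_mul (by positivity)]
  congr 2
  field_simp

theorem kap_le (N : ℕ) (hN : 0 < N) : kap N ≤ √(2 * Real.pi * Real.exp 1 / N) ^ N := by
  have hN' : (0:ℝ) < N := by exact_mod_cast hN
  have h0 : 0 < Real.Gamma ((N:ℝ)/2 + 1) := Real.Gamma_pos_of_pos (by positivity)
  unfold kap
  rw [div_le_iff₀ h0, sqrt_half N hN]
  exact mul_le_mul_of_nonneg_left (Gamma_ge _ (by positivity)) (by positivity)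

theorem le_kap (N : ℕ) (hN : 2 ≤ N) : √(2 * Real.pi * Real.exp 1 / N) ^ N ≤ Real.exp 1 * N * kap N := by
  have hN' : (2:ℝ) ≤ N := by exact_mod_cast hN
  have h0 : 0 < Real.Gamma ((N:ℝ)/2 + 1) := Real.Gamma_pos_of_pos (by positivity)
  unfold kap
  rw [← mul_div_assoc, le_div_iff₀ h0, sqrt_half N (by omega)]
  have h1 := Gamma_le ((N:ℝ)/2) (by positivity)
  have h2 : ((N:ℝ)/2+1) * Real.exp 1 * (((N:ℝ)/2) / Real.exp 1) ^ ((N:ℝ)/2) ≤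
     Real.exp 1 * N * (((N:ℝ)/2) / Real.exp 1) ^ ((N:ℝ)/2) := by
    refine mul_le_mul_of_nonneg_right ?_ (by positivity)
    rw [mul_comm]
    refine mul_le_mul_of_nonneg_left ?_ (by positivity)
    linarith
  calc _ ≤ √(2 * Real.pi * Real.exp 1 / N) ^ N * (Real.exp 1 * N * (((N:ℝ)/2) / Real.exp 1) ^ ((N:ℝ)/2)) :=
        mul_le_mul_of_nonneg_left (h1.trans h2) (by positivity)
    _ = _ := by ring

theorem kap_add_two (N : ℕ) : kap (N+2) = kap N * (Real.pi / ((N:ℝ)/2+1)) := by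
  unfold kap
  have h0 : 0 < Real.Gamma ((N:ℝ)/2 + 1) := Real.Gamma_pos_of_pos (by positivity)
  have : ((N+2:ℕ):ℝ)/2+1 = ((N:ℝ)/2+1)+1 := by push_cast; ring
  rw [this, Real.Gamma_add_one (by positivity), pow_add, Real.sq_sqrt Real.pi_pos.le]
  field_simp

theorem kap_ratio (N M : ℕ) (hN : 0 < N) : kap (N+2*M) ≤ kap N * (2*Real.pi/N)^M := by
  have hN' : (0:ℝ) < N := by exact_mod_cast hN
  have hp := Real.pi_pos
  induction M with
  | zero => simp
  | succ M ih =>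
    rw [show N + 2*(M+1) = (N+2*M)+2 by ring, kap_add_two, pow_succ, ← mul_assoc]
    refine mul_le_mul ih ?_ (by positivity) (mul_nonneg (kap_pos N).le (by positivity))
    rw [div_le_div_iff₀ (by positivity) hN']
    push_cast
    nlinarith [Nat.cast_nonneg (α := ℝ) M]

theorem vol_ball (N : ℕ) (hN : 0 < N) (r : ℝ) (hr : 0 ≤ r) :
    volume (Metric.closedBall (0 : EuclideanSpace ℝ (Fin N)) r) = ENNReal.ofReal (kap N * r^N) := by
  have : Nonempty (Fin N) := ⟨⟨0, hN⟩⟩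
  rw [EuclideanSpace.volume_closedBall, Fintype.card_fin, mul_comm, ENNReal.ofReal_mul (kap_pos N).le,
    ENNReal.ofReal_pow hr]
  rfl

end PartF1

section PartF2
open Finset

theorem cube_vol (N : ℕ) (s : Fin N → ℤ) :
    volume ((WithLp.ofLp : EuclideanSpace ℝ (Fin N) → (Fin N → ℝ)) ⁻¹'
      (Set.pi Set.univ fun i => Set.Icc ((s i:ℝ) - 1/2) ((s i:ℝ) + 1/2))) = 1 := by
  rw [(PiLp.volume_preserving_ofLp (Fin N)).measure_preimage]
  · rw [volume_pi_pi]
    refine prod_eq_one fun i _ => ?_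
    rw [Real.volume_Icc, show (s i:ℝ) + 1/2 - ((s i:ℝ) - 1/2) = 1 by ring, ENNReal.ofReal_one]
  · exact (MeasurableSet.univ_pi fun i => measurableSet_Icc).nullMeasurableSet

theorem lattice_points (N : ℕ) (hN : 0 < N) (r : ℝ) (hr : 0 ≤ r) (T : ℕ) (hT : (T:ℝ) ≤ kap N * r^N) :
    ∃ S : Finset (Fin N → ℤ), S.card = T ∧ ∀ s ∈ S, ∑ i, (s i : ℝ)^2 ≤ (r + √N/2)^2 := by
  classical
  set ρ := r + √N/2 with hρ
  have hρ0 : 0 ≤ ρ := by positivity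
  set m : ℤ := ⌈ρ⌉ with hm
  set P : Finset (Fin N → ℤ) := (Fintype.piFinset fun _ => Icc (-m) m).filter
    (fun s => ∑ i, (s i : ℝ)^2 ≤ ρ^2) with hP
  have hmem : ∀ s : Fin N → ℤ, ∑ i, (s i : ℝ)^2 ≤ ρ^2 → s ∈ P := by
    intro s hs
    rw [hP, mem_filter, Fintype.mem_piFinset]
    refine ⟨fun i => ?_, hs⟩
    have h1 : (s i:ℝ)^2 ≤ ρ^2 :=
      (single_le_sum (f := fun i => (s i : ℝ)^2) (fun j _ => sq_nonneg _) (mem_univ i)).trans hs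
    have h2 := abs_le.1 (abs_le_of_sq_le_sq h1 hρ0)
    have h3 : ρ ≤ (m:ℝ) := Int.le_ceil ρ
    rw [mem_Icc]
    constructor
    · have : ((-m:ℤ):ℝ) ≤ s i := by push_cast; linarith
      exact_mod_cast this
    · have : (s i:ℝ) ≤ m := by linarith
      exact_mod_cast this
  have hcov : Metric.closedBall (0 : EuclideanSpace ℝ (Fin N)) r ⊆ ⋃ s ∈ P,
      ((WithLp.ofLp : EuclideanSpace ℝ (Fin N) → (Fin N → ℝ)) ⁻¹'
      (Set.pi Set.univ fun i => Set.Icc ((s i:ℝ) - 1/2) ((s i:ℝ) + 1/2))) := by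
    intro x hx
    rw [mem_closedBall_zero_iff] at hx
    simp only [Set.mem_iUnion]
    have hr1 : ∀ i, |x i - round (x i)| ≤ 1/2 := fun i => abs_sub_round _
    refine ⟨fun i => round (x i), hmem _ ?_, ?_⟩
    · set y : EuclideanSpace ℝ (Fin N) := WithLp.toLp 2 (fun i => (round (x i) : ℝ)) with hy
      have h4 : ‖y‖^2 = ∑ i, (round (x i) : ℝ)^2 := by
        rw [EuclideanSpace.norm_sq_eq]; simp [hy]
      have h5 : ‖x - y‖ ≤ √N/2 := by
        apply le_of_sq_le_sq _ (by positivity)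
        rw [EuclideanSpace.norm_sq_eq, div_pow, Real.sq_sqrt (by positivity)]
        calc ∑ i, ‖(x - y) i‖^2 ≤ ∑ i : Fin N, (1/2:ℝ)^2 := by
              refine sum_le_sum fun i _ => ?_
              refine pow_le_pow_left₀ (norm_nonneg _) ?_ 2
              simpa [hy] using hr1 i
          _ = _ := by simp; ring
      rw [← h4]
      refine pow_le_pow_left₀ (norm_nonneg _) ?_ 2
      have h6 : ‖y‖ ≤ ‖x‖ + ‖x - y‖ := by
        have := norm_sub_le x (x - y)
        rwa [sub_sub_cancel] at this
      linarith
    · simp only [Set.mem_preimage, Set.mem_pi, Set.mem_univ, true_imp_iff, Set.mem_Icc]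
      intro i
      have := abs_le.1 (hr1 i)
      constructor
      · linarith [this.1]
      · linarith [this.2]
  have hvol : ENNReal.ofReal (kap N * r^N) ≤ P.card := by
    rw [← vol_ball N hN r hr]
    refine (measure_mono hcov).trans ((measure_biUnion_finset_le _ _).trans ?_)
    rw [sum_congr rfl fun s _ => cube_vol N s]
    simp
  have hcard : T ≤ P.card := by
    have : kap N * r^N ≤ P.card := by
      rw [← ENNReal.ofReal_natCast] at hvol
      exact (ENNReal.ofReal_le_ofReal_iff (by positivity)).1 hvol
    exact_mod_cast hT.trans this
  obtain ⟨S, hS, hSc⟩ := Finset.exists_subset_card_eq hcard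
  refine ⟨S, hSc, fun s hs => ?_⟩
  have := hS hs
  rw [hP, mem_filter] at this
  exact this.2

theorem red_inj (q N : ℕ) (S : Finset (Fin N → ℤ)) (ρ : ℝ) (hρ : 0 ≤ ρ) (hq : 2 * ρ < q)
    (hS : ∀ s ∈ S, ∑ i, (s i : ℝ)^2 ≤ ρ^2) :
    Set.InjOn (fun (s : Fin N → ℤ) i => (s i : ZMod q)) (S : Set (Fin N → ℤ)) := by
  have h1 : ∀ s ∈ S, ∀ i, |(s i:ℝ)| ≤ ρ := by
    intro s hs i
    exact abs_le_of_sq_le_sq ((single_le_sum (f := fun i => (s i : ℝ)^2) (fun j _ => sq_nonneg _) (mem_univ i)).trans (hS s hs)) hρ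
  intro s hs t ht hst
  funext i
  have h2 := congrFun hst i
  simp only at h2
  rw [ZMod.intCast_eq_intCast_iff_dvd_sub] at h2
  have h3 : |t i - s i| < (q:ℤ) := by
    have : |(t i:ℝ) - s i| < q := by
      have := abs_sub (t i:ℝ) (s i)
      linarith [h1 s hs i, h1 t ht i]
    exact_mod_cast this
  have := Int.eq_zero_of_abs_lt_dvd h2 h3
  omega

end PartF2

section PartF3
open Finset

theorem A_bound (N b : ℕ) (hN : 100 ≤ N) (r T : ℝ) (hr1 : (N:ℝ)^3 ≤ r)
    (hT : T = kap N * r^N) (hb2 : (b:ℝ) ≤ 2*(r + √N/2)^2/N + 1) :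
    Real.exp (N/2+1) / cb b ^ N ≤ (N:ℝ)^2 * T := by
  have hN' : (100:ℝ) ≤ N := by exact_mod_cast hN
  have hN0 : (0:ℝ) < N := by linarith
  have hr0 : 0 < r := lt_of_lt_of_le (by positivity) hr1
  have hp := Real.pi_pos
  have he := Real.exp_pos 1
  have hT0 : 0 < T := by rw [hT]; have := kap_pos N; positivity
  have h1 : 1 / cb b ≤ √(Real.pi * (b+1/2)) := by
    apply Real.le_sqrt_of_sq_le
    have := le_cb b
    have hc := cb_pos b
    rw [div_pow, one_pow, div_le_iff₀ (by positivity)]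
    rwa [div_le_iff₀ (by positivity), mul_comm] at this
  have h2 : Real.exp (N/2+1) = Real.exp 1 * √(Real.exp 1)^N := by
    have : √(Real.exp 1)^N = Real.exp (N/2) := by
      rw [← Real.exp_half, ← Real.exp_nat_mul]; congr 1; ring
    rw [this, ← Real.exp_add]; congr 1; ring
  have h3 : Real.exp (N/2+1) / cb b ^ N ≤ Real.exp 1 * √(Real.exp 1 * (Real.pi * (b+1/2)))^N := by
    calc Real.exp (N/2+1) / cb b ^ N = Real.exp 1 * √(Real.exp 1)^N * (1 / cb b)^N := by
          rw [h2, div_pow, one_pow]; ring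
      _ ≤ Real.exp 1 * √(Real.exp 1)^N * √(Real.pi * (b+1/2))^N := by
          have hc := cb_pos b
          gcongr
      _ = _ := by rw [mul_assoc, ← mul_pow, ← Real.sqrt_mul he.le]
  have h4 : (b:ℝ) + 1/2 ≤ 2*r^2/N * Real.exp (2/N) := by
    have hs : √(N:ℝ) ≤ N := by
      rw [Real.sqrt_le_left hN0.le]; nlinarith
    have hs2 : √(N:ℝ)^2 = N := Real.sq_sqrt hN0.le
    have e1 : 1 + 2/(N:ℝ) ≤ Real.exp (2/N) := by linarith [Real.add_one_le_exp (2/(N:ℝ))]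
    have e2 : 2*(r + √N/2)^2/N + 1 + 1/2 ≤ 2*r^2/N * (1 + 2/N) := by
      have : 2*(r + √N/2)^2/N = 2*r^2/N + 2 * (r * √N)/N + 1/2 := by
        field_simp; rw [add_sq, mul_pow, hs2]; ring
      rw [this]
      have e3 : 2 * (r * √N)/N ≤ 2 * r := by
        rw [div_le_iff₀ hN0]; nlinarith
      have e4 : 2*r^2/N * (1 + 2/N) = 2*r^2/N + 4 * r^2/N^2 := by field_simp; ring
      have e5 : 2 * r + 2 ≤ 4 * r^2/N^2 := by
        rw [le_div_iff₀ (by positivity)]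
        have e6 : (N:ℝ)^2 * N ≤ r := by rw [← pow_succ]; exact hr1
        have e7 : (N:ℝ)^2 ≤ r := le_trans (by nlinarith) e6
        have e8 : 1 ≤ r := le_trans (by nlinarith) e7
        nlinarith
      linarith
    calc (b:ℝ)+1/2 ≤ 2*r^2/N * (1 + 2/N) := by linarith
      _ ≤ _ := by gcongr
  have h5 : √(Real.exp 1 * (Real.pi * (b+1/2)))^N ≤ √(2 * Real.pi * Real.exp 1 / N)^N * r^N * Real.exp 1 := by
    have e1 : √(Real.exp 1 * (Real.pi * (b+1/2))) ≤ √(2 * Real.pi * Real.exp 1 / N) * r * Real.exp (1/N) := by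
      rw [Real.sqrt_le_left (by positivity), mul_pow, mul_pow, Real.sq_sqrt (by positivity), ← Real.exp_nat_mul]
      have : ((2:ℕ):ℝ) * (1/N) = 2/N := by push_cast; ring
      rw [this]
      calc Real.exp 1 * (Real.pi * (b+1/2)) ≤ Real.exp 1 * (Real.pi * (2*r^2/N * Real.exp (2/N))) := by gcongr
        _ = _ := by ring
    calc _ ≤ (√(2 * Real.pi * Real.exp 1 / N) * r * Real.exp (1/N))^N := by gcongr
      _ = _ := by
        rw [mul_pow, mul_pow, ← Real.exp_nat_mul]
        congr 2; field_simp
  have h6 := le_kap N (by omega)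
  calc _ ≤ Real.exp 1 * √(Real.exp 1 * (Real.pi * (b+1/2)))^N := h3
    _ ≤ Real.exp 1 * (√(2 * Real.pi * Real.exp 1 / N)^N * r^N * Real.exp 1) := by gcongr
    _ ≤ Real.exp 1 * ((Real.exp 1 * N * kap N) * r^N * Real.exp 1) := by gcongr
    _ = Real.exp 1 ^ 3 * N * T := by rw [hT]; ring
    _ ≤ N * N * T := by
        have : Real.exp 1 ^ 3 ≤ N := by
          have h7 : Real.exp 1 ≤ 3 := by linarith [Real.exp_one_lt_d9]
          calc Real.exp 1 ^ 3 ≤ (3:ℝ)^3 := by gcongr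
            _ ≤ (N:ℝ) := by linarith
        gcongr
    _ = _ := by ring

theorem T_bound (N b i : ℕ) (hN : 100 ≤ N) (r T : ℝ) (hr1 : (N:ℝ)^3 ≤ r)
    (hT : T = kap N * r^N) (hb1 : 2*(r + √N/2)^2/N ≤ (b:ℝ)) :
    T * cb (b*(i+1))^N ≤ √(Real.exp 1/(i+1))^N := by
  have hN' : (100:ℝ) ≤ N := by exact_mod_cast hN
  have hN0 : (0:ℝ) < N := by linarith
  have hr0 : 0 < r := lt_of_lt_of_le (by positivity) hr1
  have hp := Real.pi_pos
  have he := Real.exp_pos 1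
  have hb0 : (0:ℝ) < b := lt_of_lt_of_le (by positivity) hb1
  have hbn : 0 < b := by exact_mod_cast hb0
  have h1 : cb (b*(i+1)) ≤ √(1/(Real.pi * (b*(i+1)))) := by
    apply Real.le_sqrt_of_sq_le
    have := cb_le (b*(i+1)) (by positivity)
    push_cast at this
    exact this
  have h2 : √(2 * Real.pi * Real.exp 1 / N) * r * √(1/(Real.pi * (b*(i+1)))) ≤ √(Real.exp 1/(i+1)) := by
    apply Real.le_sqrt_of_sq_le
    rw [mul_pow, mul_pow, Real.sq_sqrt (by positivity), Real.sq_sqrt (by positivity)]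
    have : 2 * Real.pi * Real.exp 1 / N * r^2 * (1/(Real.pi * (b*(i+1)))) = (2*r^2/N/b) * (Real.exp 1/(i+1)) := by
      field_simp
    rw [this]
    have h3 : 2*r^2/N/b ≤ 1 := by
      rw [div_le_one hb0]
      refine le_trans ?_ hb1
      gcongr
      linarith [Real.sqrt_nonneg (N:ℝ)]
    exact mul_le_of_le_one_left (by positivity) h3
  have hc := cb_pos (b*(i+1))
  calc T * cb (b*(i+1))^N ≤ (√(2 * Real.pi * Real.exp 1 / N)^N * r^N) * √(1/(Real.pi * (b*(i+1))))^N := by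
        rw [hT]; have := kap_le N (by omega); gcongr
    _ = (√(2 * Real.pi * Real.exp 1 / N) * r * √(1/(Real.pi * (b*(i+1)))))^N := by rw [mul_pow, mul_pow]
    _ ≤ _ := by gcongr

theorem relhyp (q : ℕ) [Fact q.Prime] (N v : ℕ) (hN : 100 ≤ N) (hv : 1000 * v ≤ N) (r η : ℝ)
    (hr1 : (N:ℝ)^3 ≤ r) (hr2 : r ≤ 2*(N:ℝ)^3) (hq1 : N^7 < q) (hq2 : q ≤ N^8)
    (S : Finset (Fin N → ℤ)) (hcard : (S.card:ℝ) = kap N * r^N)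
    (hS : ∀ s ∈ S, ∑ i, (s i : ℝ)^2 ≤ (r + √N/2)^2)
    (hinj : Set.InjOn (red q) (S : Set (Fin N → ℤ)))
    (hnum : ∀ i : ℕ, 2 ≤ i → i ≤ 8*v → (N:ℝ)^(11*i) * √(Real.exp 1/(i+1))^N ≤ η) :
    RelHyp (S.image (red q)) η (8*v) := by
  have hN' : (100:ℝ) ≤ N := by exact_mod_cast hN
  have hN0 : (0:ℝ) < N := by linarith
  have hr0 : 0 < r := lt_of_lt_of_le (by positivity) hr1
  set ρ := r + √N/2 with hρ
  have hρ0 : 0 < ρ := by positivity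
  have hs : √(N:ℝ) ≤ N := by
    rw [Real.sqrt_le_left hN0.le]; nlinarith
  have hN3 : (N:ℝ) ≤ (N:ℝ)^3 := by nlinarith [sq_nonneg (N:ℝ)]
  have hN2 : 100 * (N:ℝ)^2 ≤ (N:ℝ)^3 := by rw [pow_succ' _ 2]; gcongr
  have hρ2 : ρ ≤ 3*(N:ℝ)^3 := by linarith
  have hρ1 : (N:ℝ)^3 ≤ ρ := by linarith [Real.sqrt_nonneg (N:ℝ)]
  set b : ℕ := ⌈2*ρ^2/N⌉₊ with hb
  have hb1 : 2*ρ^2/N ≤ (b:ℝ) := Nat.le_ceil _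
  have hb2 : (b:ℝ) ≤ 2*ρ^2/N + 1 := (Nat.ceil_lt_add_one (by positivity)).le
  have hb0 : (0:ℝ) < b := lt_of_lt_of_le (by positivity) hb1
  have hbn : 0 < b := by exact_mod_cast hb0
  have hb3 : (b:ℝ) ≤ 19 * (N:ℝ)^5 := by
    have h1 : 2*ρ^2/N ≤ 18 * (N:ℝ)^5 := by
      rw [div_le_iff₀ hN0]
      calc 2*ρ^2 ≤ 2*(3*(N:ℝ)^3)^2 := by gcongr
        _ = _ := by ring
    have h2 : 1 ≤ (N:ℝ)^5 := one_le_pow₀ (by linarith)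
    linarith
  set A : ℝ := Real.exp (N/2+1) / cb b ^ N with hA
  have hcb := cb_pos b
  have hA0 : 0 < A := by positivity
  set T : ℝ := (S.card:ℝ) with hTdef
  have hT0 : 0 < T := by rw [hcard]; have := kap_pos N; positivity
  have hAT : A ≤ (N:ℝ)^2 * T := A_bound N b hN r T hr1 hcard hb2
  have hdom : ∀ s ∈ S.image (red q), 1 ≤ A * ∏ c, gw q b (s c) := by
    intro s hs
    rw [mem_image] at hs
    obtain ⟨u, hu, rfl⟩ := hs
    have h4ρ : 4 * ρ ≤ b := by
      refine le_trans ?_ hb1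
      rw [le_div_iff₀ hN0]
      nlinarith
    have h1 := prod_gw_ge q N b hbn u ρ hρ0.le (hS u hu) h4ρ
    have h2 : ρ^2/b + 2*ρ^3/(b:ℝ)^2 ≤ N/2+1 := by
      have e1 : ρ^2/b ≤ N/2 := by
        rw [div_le_iff₀ hb0]
        rw [div_le_iff₀ hN0] at hb1
        linarith
      have e2 : 2*ρ^3/(b:ℝ)^2 ≤ 1 := by
        rw [div_le_one (by positivity)]
        have : (2*ρ^2/N)^2 ≤ (b:ℝ)^2 := by gcongr
        refine le_trans ?_ this
        rw [div_pow, le_div_iff₀ (by positivity)]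
        have : (N:ℝ)^2 ≤ ρ := by linarith [sq_nonneg (N:ℝ)]
        calc 2*ρ^3*N^2 ≤ 2*ρ^3*ρ := by gcongr
          _ ≤ (2*ρ^2)^2 := by nlinarith [pow_pos hρ0 4]
      linarith
    have h3 : 1 ≤ A * (cb b ^ N * Real.exp (-(ρ^2/b + 2*ρ^3/(b:ℝ)^2))) := by
      have : A * (cb b ^ N * Real.exp (-(ρ^2/b + 2*ρ^3/(b:ℝ)^2))) = Real.exp (N/2+1 - (ρ^2/b + 2*ρ^3/(b:ℝ)^2)) := by
        rw [hA, sub_eq_add_neg, Real.exp_add ((N:ℝ)/2+1)]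
        generalize Real.exp (-(ρ^2/b + 2*ρ^3/(b:ℝ)^2)) = E
        generalize Real.exp ((N:ℝ)/2+1) = E2
        field_simp
      rw [this]
      exact Real.one_le_exp (by linarith)
    refine h3.trans ?_
    exact mul_le_mul_of_nonneg_left h1 hA0.le
  intro κ _ _ μ hμ hκ2 hκ8
  set i := Fintype.card κ with hi
  have hBq : b * (i + 1) < q := by
    have h1 : ((b * (i+1) : ℕ):ℝ) ≤ ((N^7:ℕ):ℝ) := by
      push_cast
      have h2 : (i:ℝ)+1 ≤ N/50 := by
        have : 50 * (i + 1) ≤ N := by omega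
        have : (50:ℝ) * (i + 1) ≤ N := by exact_mod_cast this
        linarith
      calc (b:ℝ) * (i+1) ≤ (19 * (N:ℝ)^5) * (N/50) := by gcongr
        _ ≤ (N:ℝ)^6 := by nlinarith [pow_pos hN0 6]
        _ ≤ (N:ℝ)^7 := pow_le_pow_right₀ (by linarith) (by norm_num)
    exact lt_of_le_of_lt (by exact_mod_cast h1) hq1
  have hcnt := rel_count q N b (S.image (red q)) A hA0.le hdom κ μ hμ hBq
  rw [card_image_of_injOn hinj, ZMod.card]
  have hTb := T_bound N b i hN r T hr1 hcard hb1
  have hq2' : (q:ℝ) ≤ (N:ℝ)^8 := by exact_mod_cast hq2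
  have hcbB := cb_pos (b*(i+1))
  calc (q:ℝ)^i * _ ≤ (q:ℝ)^i * (A^(i+1) * cb (b*(i+1))^N) := by
        refine mul_le_mul_of_nonneg_left ?_ (by positivity)
        exact hcnt
    _ ≤ ((N:ℝ)^8)^i * (((N:ℝ)^2 * T)^(i+1) * cb (b*(i+1))^N) := by gcongr
    _ = (N:ℝ)^(8*i+2*(i+1)) * (T * cb (b*(i+1))^N) * T^i := by
        rw [mul_pow, ← pow_mul, ← pow_mul, pow_add, pow_succ T]; ring
    _ ≤ (N:ℝ)^(11*i) * √(Real.exp 1/(i+1))^N * T^i := by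
        gcongr
        · linarith
        · omega
    _ ≤ η * T^i := by
        gcongr
        exact hnum i hκ2 hκ8

end PartF3

section PartF4
open Finset

theorem R_le (N M : ℕ) (hN : 0 < N) (r : ℝ) (hr : 0 < r) :
    √((r + √N)^2 + 2*r^2*M/N) ≤ r * Real.exp (√N/r + M/N) := by
  have hN' : (0:ℝ) < N := by exact_mod_cast hN
  rw [Real.sqrt_le_left (by positivity), mul_pow, ← Real.exp_nat_mul]
  set x := √(N:ℝ)/r with hx
  have hx0 : 0 ≤ x := by positivity
  have e1 : (r + √N)^2 + 2*r^2*M/N = r^2 * ((1+x)^2 + 2*(M/N)) := by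
    rw [hx]; field_simp
  rw [e1]
  refine mul_le_mul_of_nonneg_left ?_ (by positivity)
  have e2 : ((2:ℕ):ℝ) * (x + M/N) = ((2:ℕ):ℝ) * x + 2*(M/N) := by push_cast; ring
  rw [e2, Real.exp_add, Real.exp_nat_mul]
  set y : ℝ := 2*((M:ℝ)/N) with hy
  have hy0 : 0 ≤ y := by positivity
  have h1 : (1+x)^2 ≤ Real.exp x ^ 2 := by
    have := Real.add_one_le_exp x
    gcongr; linarith
  have h2 := Real.add_one_le_exp y
  have h3 : 1 ≤ Real.exp x ^ 2 := one_le_pow₀ (Real.one_le_exp hx0)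
  calc (1+x)^2 + y ≤ Real.exp x^2 + Real.exp x^2 * y := by nlinarith
    _ = Real.exp x^2 * (y+1) := by ring
    _ ≤ _ := by gcongr

theorem dens_le (N M n : ℕ) (hn : N + 2*M = n) (hN : 0 < N) (r Q v s : ℝ) (hr : 0 < r) (hQ : 0 < Q)
    (hk : v * Q = kap N * r^N) (hs : s^2 = 3*r^2/(2*N)) :
    kap n * √((r + √N)^2 + 2*r^2*M/N)^n / (Q * (s^2*√3/2)^M) ≤
      v * (8*Real.pi/(3*√3))^M * Real.exp (n * (√N/r + M/N)) := by
  have hN' : (0:ℝ) < N := by exact_mod_cast hN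
  have hp := Real.pi_pos
  have h3 : (0:ℝ) < √3 := by positivity
  have hs0 : 0 < s^2 := by rw [hs]; positivity
  rw [div_le_iff₀ (by positivity)]
  have hkn := kap_pos n
  have h1 : kap n ≤ kap N * (2*Real.pi/N)^M := by rw [← hn]; exact kap_ratio N M hN
  have hkN := kap_pos N
  calc kap n * √((r + √N)^2 + 2*r^2*M/N)^n
      ≤ (kap N * (2*Real.pi/N)^M) * (r * Real.exp (√N/r + M/N))^n := by
        have := R_le N M hN r hr
        gcongr
    _ = (kap N * r^N) * ((2*Real.pi/N) * r^2)^M * Real.exp (n * (√N/r + M/N)) := by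
        rw [mul_pow, ← Real.exp_nat_mul]
        have : r^n = r^N * (r^2)^M := by rw [← pow_mul, ← pow_add, hn]
        rw [this]; ring
    _ = (v*Q) * ((8*Real.pi/(3*√3)) * (s^2*√3/2))^M * Real.exp (n * (√N/r + M/N)) := by
        rw [hk, hs]
        congr 3
        field_simp
        norm_num
    _ = _ := by rw [mul_pow]; ring

theorem fin_aux (v c : ℝ) (M : ℕ) : v * c^M * Real.exp (2+M) = (v * Real.exp 1 ^ 2) * (c^M * Real.exp 1 ^ M) := by
  rw [Real.exp_add, ← Real.exp_nat_mul, ← Real.exp_nat_mul, mul_one, mul_one]; push_cast; ring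

theorem re_aux (N M : ℕ) (r s ρ : ℝ) (hN0 : (0:ℝ) < N) (hs2 : s^2 = 3*r^2/(2*N)) (hρ : ρ = r + √N/2) :
    (√N / 2 + ρ) ^ 2 + 4 / 3 * s ^ 2 * M = (r + √N)^2 + 2*r^2*M/N := by
  have e1 : √(N:ℝ)/2 + ρ = r + √N := by rw [hρ]; ring
  rw [e1, hs2]
  congr 1
  field_simp
  ring

set_option maxHeartbeats 2000000 in
theorem large (N M n : ℕ) (hn : N + 2*M = n) (hN : 1000 ≤ N)
    (hnum : ∀ i : ℕ, 2 ≤ i → i ≤ 8*(N/1000) →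
      (N:ℝ)^(11*i) * √(Real.exp 1/(i+1))^N ≤ Real.exp (-(5*((N/1000:ℕ):ℝ))))
    (hG0 : 60 * (N:ℝ)^3 * Real.exp (2*N) ≤ (N:ℝ)^(2*N))
    (h2 : 2*N^7 ≤ 2^N) (hK : 4 * (3:ℝ)^(M+1) ≤ Real.exp (((N/1000:ℕ):ℝ)/2))
    (hvM : 4 * N * Real.log N < ((N/1000:ℕ):ℝ)/2 * 4^M)
    (hnN : n ≤ 2*N) (hMN : 2*M^2 ≤ N) :
    ∃ (b : Fin n → EuclideanSpace ℝ (Fin n)) (R : ℝ), 0 < R ∧ IsLatticeCovering b R ∧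
      coveringDensity b R ≤ n * (8*Real.pi*Real.exp 1/(3*√3))^M := by
  set v : ℕ := N/1000 with hv
  have hv1 : 1 ≤ v := by omega
  have hvN : 1000 * v ≤ N := by omega
  have hN' : (1000:ℝ) ≤ N := by exact_mod_cast hN
  have hN0 : (0:ℝ) < N := by linarith
  have hv1' : (1:ℝ) ≤ v := by exact_mod_cast hv1
  have hvN' : 1000 * (v:ℝ) ≤ N := by exact_mod_cast hvN
  have hp := Real.pi_pos
  have he3 : Real.exp 1 ≤ 3 := by linarith [Real.exp_one_lt_d9]
  have hkap := kap_pos N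
  obtain ⟨q, hq, hq1, hq2⟩ := Nat.exists_prime_lt_and_le_two_mul (N^7) (by positivity)
  have : Fact q.Prime := ⟨hq⟩
  have hq0 : (0:ℝ) < q := by exact_mod_cast hq.pos
  have hq1' : (1:ℝ) < q := by exact_mod_cast hq.one_lt
  have hex : ∃ k : ℕ, kap N * ((N:ℝ)^3)^N ≤ v * (q:ℝ)^k := by
    obtain ⟨k, hk⟩ := pow_unbounded_of_one_lt (kap N * ((N:ℝ)^3)^N) hq1'
    exact ⟨k, hk.le.trans (le_mul_of_one_le_left (by positivity) hv1')⟩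
  classical
  set k := Nat.find hex with hkdef
  have hk : kap N * ((N:ℝ)^3)^N ≤ v * (q:ℝ)^k := Nat.find_spec hex
  have hlow : (N:ℝ)^(2*N) ≤ Real.exp 1 * N * (v * (q:ℝ)^k) := by
    have h1 := le_kap N (by omega)
    have h3 : (N:ℝ)^2 ≤ √(2*Real.pi*Real.exp 1/N) * (N:ℝ)^3 := by
      have : 1/(N:ℝ) ≤ √(2*Real.pi*Real.exp 1/N) := by
        apply Real.le_sqrt_of_sq_le
        rw [div_pow, one_pow, div_le_div_iff₀ (by positivity) hN0]
        have := Real.pi_gt_three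
        have := Real.add_one_le_exp (1:ℝ)
        have : 1 ≤ 2*Real.pi*Real.exp 1 := by nlinarith
        nlinarith
      calc (N:ℝ)^2 = 1/N * (N:ℝ)^3 := by field_simp
        _ ≤ _ := by gcongr
    calc (N:ℝ)^(2*N) = ((N:ℝ)^2)^N := by rw [pow_mul]
      _ ≤ (√(2*Real.pi*Real.exp 1/N) * (N:ℝ)^3)^N := by gcongr
      _ = √(2*Real.pi*Real.exp 1/N)^N * ((N:ℝ)^3)^N := by rw [mul_pow]
      _ ≤ (Real.exp 1 * N * kap N) * ((N:ℝ)^3)^N := by gcongr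
      _ = Real.exp 1 * N * (kap N * ((N:ℝ)^3)^N) := by ring
      _ ≤ _ := by gcongr
  have hqk0 : (0:ℝ) < (q:ℝ)^k := by positivity
  have hG : 20 * (N:ℝ) * Real.exp (2*N) ≤ (q:ℝ)^k := by
    have h3 : Real.exp 1 * N * (v * (q:ℝ)^k) ≤ 3 * N * (N * (q:ℝ)^k) := by
      have : (v:ℝ) ≤ N := by linarith
      gcongr
    have h4 : (3*(N:ℝ)^2) * (20 * (N:ℝ) * Real.exp (2*N)) ≤ (3*(N:ℝ)^2) * (q:ℝ)^k := by
      calc _ = 60 * (N:ℝ)^3 * Real.exp (2*N) := by ring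
        _ ≤ _ := hG0.trans (hlow.trans h3)
        _ = _ := by ring
    exact le_of_mul_le_mul_left h4 (by positivity)
  have hk1 : k ≠ 0 := by
    intro h0
    rw [h0, pow_zero] at hG
    have : 1 ≤ Real.exp (2*N) := Real.one_le_exp (by positivity)
    nlinarith
  have hup : v * (q:ℝ)^k ≤ q * (kap N * ((N:ℝ)^3)^N) := by
    have := Nat.find_min hex (m := k-1) (by omega)
    push Not at this
    have e : (q:ℝ)^k = q * (q:ℝ)^(k-1) := by rw [← pow_succ']; congr 1; omega
    rw [e]
    calc _ = q * (v * (q:ℝ)^(k-1)) := by ring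
      _ ≤ _ := by gcongr
  set r : ℝ := (v * (q:ℝ)^k / kap N)^((N:ℝ)⁻¹) with hr
  have hr0 : 0 < r := by positivity
  have hrN : r^N = v * (q:ℝ)^k / kap N := by
    rw [hr]; exact Real.rpow_inv_natCast_pow (by positivity) (by omega)
  have hT : v * (q:ℝ)^k = kap N * r^N := by rw [hrN]; field_simp
  have hr1 : (N:ℝ)^3 ≤ r := by
    apply le_of_pow_le_pow_left₀ (n := N) (by omega) hr0.le
    rw [hrN, le_div_iff₀ hkap, mul_comm]; exact hk
  have hr2 : r ≤ 2*(N:ℝ)^3 := by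
    apply le_of_pow_le_pow_left₀ (n := N) (by omega) (by positivity)
    rw [hrN, div_le_iff₀ hkap, mul_pow]
    have : (q:ℝ) ≤ 2^N := by exact_mod_cast hq2.trans h2
    calc _ ≤ q * (kap N * ((N:ℝ)^3)^N) := hup
      _ ≤ 2^N * (kap N * ((N:ℝ)^3)^N) := by gcongr
      _ = _ := by ring
  obtain ⟨S, hSc, hS⟩ := lattice_points N (by omega) r hr0.le (v * q^k) (by push_cast; exact hT.le)
  have hs : √(N:ℝ) ≤ N := by
    rw [Real.sqrt_le_left hN0.le]; nlinarith
  set ρ := r + √N/2 with hρ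
  have hρ0 : 0 ≤ ρ := by positivity
  have hN3 : (N:ℝ) ≤ (N:ℝ)^3 := by nlinarith [sq_nonneg (N:ℝ)]
  have h2ρ : 2*ρ < q := by
    have h3 : ((N^7:ℕ):ℝ) < q := by exact_mod_cast hq1
    push_cast at h3
    have h4 : 6 * (N:ℝ)^3 ≤ (N:ℝ)^4 := by rw [pow_succ' _ 3]; gcongr; linarith
    have h5 : (N:ℝ)^4 ≤ (N:ℝ)^7 := pow_le_pow_right₀ (by linarith) (by norm_num)
    linarith
  have hinj : Set.InjOn (red q) (S : Set (Fin N → ℤ)) := red_inj q N S ρ hρ0 h2ρ hS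
  have hR : RelHyp (S.image (red q)) (Real.exp (-(5*(v:ℝ)))) (8*v) := by
    refine relhyp q N v (by omega) hvN r _ hr1 hr2 hq1 ?_ S ?_ hS hinj hnum
    · calc q ≤ 2 * N^7 := hq2
        _ ≤ N * N^7 := by gcongr; omega
        _ = N^8 := by ring
    · rw [hSc]; push_cast; exact hT
  have hkap1 : kap N ≤ 1 := by
    refine (kap_le N (by omega)).trans (pow_le_one₀ (Real.sqrt_nonneg _) ?_)
    rw [Real.sqrt_le_one, div_le_one hN0]
    have := Real.pi_le_four
    nlinarith [Real.exp_pos 1]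
  have hqk : (q:ℝ)^k ≤ Real.exp (4*N*Real.log N) := by
    have e1 : Real.exp (4*N*Real.log N) = ((N:ℝ)^4)^N := by
      rw [← pow_mul, ← Real.exp_log (show (0:ℝ) < (N:ℝ)^(4*N) by positivity), Real.log_pow]
      push_cast; rfl
    rw [e1]
    calc (q:ℝ)^k ≤ v * (q:ℝ)^k := le_mul_of_one_le_left hqk0.le hv1'
      _ = kap N * r^N := hT
      _ ≤ 1 * (2*(N:ℝ)^3)^N := by gcongr
      _ ≤ ((N:ℝ)^4)^N := by
        rw [one_mul]
        gcongr
        rw [pow_succ' _ 3]; gcongr; linarith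
  have hs' : ((3:ℝ)^(M+1) * (4 * Real.exp (-(v:ℝ))))^(4^M) * (q:ℝ)^k < (3:ℝ)^(M+1) := by
    have e1 : (3:ℝ)^(M+1) * (4 * Real.exp (-(v:ℝ))) ≤ Real.exp (-((v:ℝ)/2)) := by
      calc _ = (4 * (3:ℝ)^(M+1)) * Real.exp (-(v:ℝ)) := by ring
        _ ≤ Real.exp ((v:ℝ)/2) * Real.exp (-(v:ℝ)) := by gcongr
        _ = _ := by rw [← Real.exp_add]; congr 1; ring
    calc _ ≤ Real.exp (-((v:ℝ)/2))^(4^M) * Real.exp (4*N*Real.log N) := by gcongr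
      _ = Real.exp (4*N*Real.log N - (v:ℝ)/2 * 4^M) := by
        rw [← Real.exp_nat_mul, ← Real.exp_add]; congr 1; push_cast; ring
      _ < 1 := by rw [Real.exp_lt_one_iff]; linarith
      _ ≤ _ := one_le_pow₀ (by norm_num)
  set s : ℝ := √(3*r^2/(2*N)) with hsdef
  have hs0 : 0 < s := Real.sqrt_pos.2 (by positivity)
  have hs2 : s^2 = 3*r^2/(2*N) := Real.sq_sqrt (by positivity)
  obtain ⟨b, hb1, hb2⟩ := combine q N M n k v hn (by omega) S ρ hρ0 hS hinj _ (Real.exp_pos _).le hR hSc le_rfl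
    (by
      refine le_trans ?_ hG
      have : (v:ℝ) ≤ N := by linarith
      gcongr)
    ((3:ℝ)^(M+1)) (by rw [pow_succ']; have : (0:ℝ) < 3^M := by positivity
                      linarith) hs' s hs0
  have hRe : (√N / 2 + ρ) ^ 2 + 4 / 3 * s ^ 2 * M = (r + √N)^2 + 2*r^2*M/N := by
    exact re_aux N M r _ _ hN0 hs2 hρ
  rw [hRe] at hb1
  refine ⟨b, _, Real.sqrt_pos.2 (by positivity), hb1, ?_⟩
  unfold coveringDensity
  rw [vol_ball n (by omega) _ (Real.sqrt_nonneg _), ENNReal.toReal_ofReal (by have := kap_pos n; positivity), hb2]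
  refine (dens_le N M n hn (by omega) r _ v s hr0 hqk0 hT hs2).trans ?_
  have hnr : (n:ℝ) = N + 2*M := by rw [← hn]; push_cast; ring
  have hnN' : (n:ℝ) ≤ 2*N := by exact_mod_cast hnN
  have hMN' : 2*(M:ℝ)^2 ≤ N := by exact_mod_cast hMN
  have hexp : (n:ℝ) * (√N/r + M/N) ≤ 2 + M := by
    have e1 : (n:ℝ) * (√N/r) ≤ 1 := by
      rw [← mul_div_assoc, div_le_one hr0]
      calc (n:ℝ) * √N ≤ (2*N) * N := by gcongr
        _ = 2 * (N:ℝ)^2 := by ring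
        _ ≤ N * (N:ℝ)^2 := mul_le_mul_of_nonneg_right (by linarith) (sq_nonneg _)
        _ = (N:ℝ)^3 := by ring
        _ ≤ r := hr1
    have e2 : (n:ℝ) * (M/N) ≤ M + 1 := by
      rw [← mul_div_assoc, div_le_iff₀ hN0, hnr]
      calc ((N:ℝ)+2*M)*M = N*M + 2*(M:ℝ)^2 := by ring
        _ ≤ N*M + N := by linarith
        _ = _ := by ring
    linarith
  have hD : (0:ℝ) < 8*Real.pi/(3*√3) := by positivity
  calc _ ≤ v * (8*Real.pi/(3*√3))^M * Real.exp (2+M) := by gcongr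
    _ = (v * Real.exp 1 ^ 2) * ((8*Real.pi/(3*√3))^M * Real.exp 1 ^ M) := by
      exact fin_aux _ _ M
    _ = (v * Real.exp 1 ^ 2) * (8*Real.pi*Real.exp 1/(3*√3))^M := by
      rw [← mul_pow]; congr 2; ring
    _ ≤ _ := by
      gcongr
      have h9 : Real.exp 1 ^ 2 ≤ 3^2 := pow_le_pow_left₀ (Real.exp_pos 1).le he3 2
      have hM0 : (0:ℝ) ≤ M := by positivity
      calc (v:ℝ) * Real.exp 1 ^ 2 ≤ v * 3^2 := mul_le_mul_of_nonneg_left h9 (by linarith)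
        _ ≤ n := by linarith

end PartF4

section PartF5
open Finset

theorem num_i (N : ℕ) (hN : 1000 ≤ N) (h1 : 440 * Real.log N ≤ √N) (h2 : 4 ≤ Real.log N)
    (i : ℕ) (hi : 2 ≤ i) (hi8 : i ≤ 8*(N/1000)) :
    (N:ℝ)^(11*i) * √(Real.exp 1/(i+1))^N ≤ Real.exp (-(5*((N/1000:ℕ):ℝ))) := by
  have hN' : (1000:ℝ) ≤ N := by exact_mod_cast hN
  have hN0 : (0:ℝ) < N := by linarith
  set L := Real.log N with hL
  have e1 : (N:ℝ)^(11*i) = Real.exp (11*i*L) := by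
    rw [← Real.exp_log (show (0:ℝ) < (N:ℝ)^(11*i) by positivity), Real.log_pow]
    push_cast; rfl
  have e2 : √(Real.exp 1/(i+1))^N = Real.exp (N/2*(1 - Real.log (i+1))) := by
    rw [← Real.exp_log (show (0:ℝ) < √(Real.exp 1/(i+1))^N by positivity), Real.log_pow,
      Real.log_sqrt (by positivity), Real.log_div (by positivity) (by positivity), Real.log_exp]
    congr 1; ring
  rw [e1, e2, ← Real.exp_add]
  apply Real.exp_le_exp.2
  have hv : 5*((N/1000:ℕ):ℝ) ≤ N/200 := by
    have : 1000 * (N/1000) ≤ N := by omega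
    have : (1000:ℝ) * ((N/1000:ℕ):ℝ) ≤ N := by exact_mod_cast this
    linarith
  have hi' : (i:ℝ) ≤ 8*N/1000 := by
    have : 1000 * i ≤ 8*N := by omega
    have : (1000:ℝ) * i ≤ 8*N := by exact_mod_cast this
    linarith
  have hi2 : (2:ℝ) ≤ i := by exact_mod_cast hi
  have hss : √(N:ℝ) * √N = N := Real.mul_self_sqrt hN0.le
  have hs0 : 0 ≤ √(N:ℝ) := Real.sqrt_nonneg _
  rcases le_total (i:ℝ) (√N) with h | h
  · have h3 : 1.06 ≤ Real.log (i+1) := by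
      rw [Real.le_log_iff_exp_le (by positivity)]
      have h4 : Real.exp 1.06 ≤ 3 := by
        have h5 : Real.exp 1.06 = Real.exp 1 * (Real.exp (-0.06))⁻¹ := by
          rw [← Real.exp_neg, ← Real.exp_add]; norm_num
        have h6 : (0.94:ℝ) ≤ Real.exp (-0.06) := by
          have := Real.add_one_le_exp (-0.06:ℝ); linarith
        have h7 : (Real.exp (-0.06))⁻¹ ≤ (0.94:ℝ)⁻¹ := by gcongr
        rw [h5]
        have h8 : Real.exp 1 ≤ 2.72 := by linarith [Real.exp_one_lt_d9]
        calc Real.exp 1 * (Real.exp (-0.06))⁻¹ ≤ 2.72 * (0.94:ℝ)⁻¹ := by gcongr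
          _ ≤ 3 := by norm_num
      linarith
    have h4 : i * L ≤ N/440 := by
      calc i * L ≤ √N * (√N/440) := by
            refine mul_le_mul h (by linarith) (by linarith) hs0
        _ = N/440 := by rw [← mul_div_assoc, hss]
    have h5 : N/2*(1 - Real.log (i+1)) ≤ N/2*(-0.06) := by
      refine mul_le_mul_of_nonneg_left (by linarith) (by positivity)
    linarith
  · have h3 : L/2 ≤ Real.log (i+1) := by
      rw [hL, ← Real.log_sqrt hN0.le]
      exact Real.log_le_log (Real.sqrt_pos.2 hN0) (by linarith)
    have h4 : i * L ≤ 8*N/1000*L := mul_le_mul_of_nonneg_right hi' (by linarith)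
    have h5 : N/2*(1 - Real.log (i+1)) ≤ N/2*(1 - L/2) := by
      refine mul_le_mul_of_nonneg_left (by linarith) (by positivity)
    have h6 : (N:ℝ) * 4 ≤ N * L := mul_le_mul_of_nonneg_left h2 hN0.le
    linarith

theorem num_G (N : ℕ) (hN : 1000 ≤ N) : 60 * (N:ℝ)^3 * Real.exp (2*N) ≤ (N:ℝ)^(2*N) := by
  have hN' : (1000:ℝ) ≤ N := by exact_mod_cast hN
  have e1 : Real.exp (2*N) ≤ (N:ℝ)^N := by
    have : Real.exp (2*N) = (Real.exp 1 ^ 2)^N := by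
      rw [← Real.exp_nat_mul, ← Real.exp_nat_mul]; congr 1; push_cast; ring
    rw [this]
    have he3 : Real.exp 1 ≤ 3 := by linarith [Real.exp_one_lt_d9]
    have h9 : Real.exp 1 ^ 2 ≤ 3^2 := pow_le_pow_left₀ (Real.exp_pos 1).le he3 2
    gcongr; linarith
  have e2 : 60 * (N:ℝ)^3 ≤ (N:ℝ)^N := by
    calc 60 * (N:ℝ)^3 ≤ N * (N:ℝ)^3 := by gcongr; linarith
      _ = (N:ℝ)^4 := by ring
      _ ≤ _ := pow_le_pow_right₀ (by linarith) (by omega)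
  calc _ ≤ (N:ℝ)^N * (N:ℝ)^N := by gcongr
    _ = _ := by rw [two_mul, pow_add]

theorem ev_N : ∃ N0 : ℕ, 2000 ≤ N0 ∧ ∀ N, N0 ≤ N → 440 * Real.log N ≤ √N ∧ 4 ≤ Real.log N ∧ 2*N^7 ≤ 2^N := by
  have hlog : Filter.Tendsto (fun N : ℕ => Real.log N) Filter.atTop Filter.atTop :=
    Real.tendsto_log_atTop.comp tendsto_natCast_atTop_atTop
  have h1 : ∀ᶠ N : ℕ in Filter.atTop, 4 ≤ Real.log N := hlog.eventually_ge_atTop 4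
  have h2 : ∀ᶠ x : ℝ in Filter.atTop, ‖Real.log x ^ 2‖ ≤ (1/440^2) * ‖id x‖ :=
    (Real.isLittleO_pow_log_id_atTop (n := 2)).def (by norm_num)
  have h2' := tendsto_natCast_atTop_atTop.eventually h2
  have h3 : ∀ᶠ N : ℕ in Filter.atTop, ((N:ℝ)^7 / 2^N) < 1/2 :=
    (tendsto_pow_const_div_const_pow_of_one_lt 7 (by norm_num : (1:ℝ) < 2)).eventually_lt_const (by norm_num)
  obtain ⟨N0, h⟩ := Filter.eventually_atTop.1 (h1.and (h2'.and h3))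
  refine ⟨max N0 2000, le_max_right _ _, fun N hN => ?_⟩
  obtain ⟨a, b, c⟩ := h N ((le_max_left _ _).trans hN)
  refine ⟨?_, a, ?_⟩
  · apply Real.le_sqrt_of_sq_le
    rw [Real.norm_of_nonneg (sq_nonneg _), id, Real.norm_of_nonneg (by positivity)] at b
    rw [mul_pow]; linarith
  · rw [div_lt_iff₀ (by positivity)] at c
    have : 2*(N:ℝ)^7 ≤ 2^N := by linarith
    exact_mod_cast this

theorem ev_n (c : ℝ) (hc : 0 < c) : ∃ n0 : ℕ, ∀ n, n0 ≤ n → c * Real.log n ≤ n ∧ c * Real.log n ^ 2 ≤ n := by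
  have h1 : ∀ᶠ x : ℝ in Filter.atTop, ‖Real.log x ^ 1‖ ≤ (1/c) * ‖id x‖ :=
    (Real.isLittleO_pow_log_id_atTop (n := 1)).def (by positivity)
  have h2 : ∀ᶠ x : ℝ in Filter.atTop, ‖Real.log x ^ 2‖ ≤ (1/c) * ‖id x‖ :=
    (Real.isLittleO_pow_log_id_atTop (n := 2)).def (by positivity)
  obtain ⟨n0, h⟩ := Filter.eventually_atTop.1
    ((tendsto_natCast_atTop_atTop.eventually h1).and (tendsto_natCast_atTop_atTop.eventually h2))
  refine ⟨n0, fun n hn => ?_⟩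
  obtain ⟨a, b⟩ := h n hn
  rw [id, Real.norm_of_nonneg (show (0:ℝ) ≤ n by positivity)] at a b
  have a' := (Real.le_norm_self _).trans a
  have b' := (Real.le_norm_self _).trans b
  rw [pow_one, one_div, le_inv_mul_iff₀ hc] at a'
  rw [one_div, le_inv_mul_iff₀ hc] at b'
  exact ⟨a', b'⟩

theorem large_n : ∃ n0 : ℕ, ∀ n, n0 ≤ n → ∃ M : ℕ, (4:ℝ)^M ≤ 80000 * Real.log n ∧
    ∃ (b : Fin n → EuclideanSpace ℝ (Fin n)) (R : ℝ), 0 < R ∧ IsLatticeCovering b R ∧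
      coveringDensity b R ≤ n * (8*Real.pi*Real.exp 1/(3*√3))^M := by
  obtain ⟨N0, hN0, hev⟩ := ev_N
  obtain ⟨n1, hn1⟩ := ev_n 100000000000 (by norm_num)
  refine ⟨max n1 (2*N0), fun n hn => ?_⟩
  have hnn1 : n1 ≤ n := (le_max_left _ _).trans hn
  have hnN0 : 2*N0 ≤ n := (le_max_right _ _).trans hn
  obtain ⟨hl1, hl2⟩ := hn1 n hnn1
  have hn4 : (4000:ℝ) ≤ n := by exact_mod_cast (by omega : 4000 ≤ n)
  have hlog4 : 4 ≤ Real.log n := (hev n (by omega)).2.1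
  have hex : ∃ M : ℕ, 20000 * Real.log n ≤ (4:ℝ)^M := by
    obtain ⟨k, hk⟩ := pow_unbounded_of_one_lt (20000 * Real.log n) (by norm_num : (1:ℝ) < 4)
    exact ⟨k, hk.le⟩
  classical
  obtain ⟨M, hM1, hM2⟩ : ∃ M : ℕ, 20000 * Real.log n ≤ (4:ℝ)^M ∧ (4:ℝ)^M ≤ 80000 * Real.log n := by
    refine ⟨Nat.find hex, Nat.find_spec hex, ?_⟩
    have h0 : Nat.find hex ≠ 0 := by
      intro h0
      have := Nat.find_spec hex
      rw [h0, pow_zero] at this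
      linarith
    have := Nat.find_min hex (m := Nat.find hex - 1) (by omega)
    push Not at this
    have e : (4:ℝ)^(Nat.find hex) = 4 * (4:ℝ)^(Nat.find hex - 1) := by rw [← pow_succ']; congr 1; omega
    rw [e]; linarith
  refine ⟨M, hM2, ?_⟩
  have hM3 : (M:ℝ) ≤ (4:ℝ)^M := by
    exact_mod_cast (Nat.lt_pow_self (by norm_num : 1 < 4)).le
  have hM4 : 4 * M ≤ n := by
    have : (4:ℝ) * M ≤ n := by linarith
    exact_mod_cast this
  have hM5 : 4 * M^2 ≤ n := by
    have h1 : (M:ℝ)^2 ≤ (80000 * Real.log n)^2 := by gcongr; exact hM3.trans hM2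
    have : (4:ℝ) * (M:ℝ)^2 ≤ n := by
      calc (4:ℝ) * (M:ℝ)^2 ≤ 4 * (80000 * Real.log n)^2 := by linarith
        _ = 25600000000 * Real.log n^2 := by ring
        _ ≤ 100000000000 * Real.log n^2 := by gcongr; norm_num
        _ ≤ n := hl2
    exact_mod_cast this
  obtain ⟨N, hN⟩ : ∃ N, N + 2*M = n := ⟨n - 2*M, by omega⟩
  have hNn : n ≤ 2*N := by omega
  have hNN0 : N0 ≤ N := by omega
  obtain ⟨ha, hb, hc⟩ := hev N hNN0
  have hN1 : 1000 ≤ N := by omega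
  have hNn' : (n:ℝ) ≤ 2*N := by exact_mod_cast hNn
  have hNpos : (0:ℝ) < N := by exact_mod_cast (by omega : 0 < N)
  have hv2 : (N:ℝ) ≤ 2000 * ((N/1000:ℕ):ℝ) := by
    have : N ≤ 2000 * (N/1000) := by omega
    exact_mod_cast this
  refine large N M n hN hN1 (num_i N hN1 ha hb) (num_G N hN1) hc ?_ ?_ hNn (by omega)
  · have h3 : (3:ℝ)^M ≤ 4^M := by gcongr; norm_num
    calc 4 * (3:ℝ)^(M+1) = 12 * 3^M := by ring
      _ ≤ 12 * (80000 * Real.log n) := by linarith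
      _ ≤ (n:ℝ)/8000 := by linarith
      _ ≤ ((N/1000:ℕ):ℝ)/2 := by linarith
      _ ≤ _ := by linarith [Real.add_one_le_exp (((N/1000:ℕ):ℝ)/2)]
  · have hlogle : Real.log N ≤ Real.log n := Real.log_le_log hNpos (by exact_mod_cast (by omega : N ≤ n))
    have h6 : 0 < (N:ℝ) * Real.log n := by positivity
    calc 4 * N * Real.log N ≤ 4 * N * Real.log n := by gcongr
      _ < 5 * (N * Real.log n) := by linarith
      _ = (N/2000)/2 * (20000 * Real.log n) := by ring
      _ ≤ ((N/1000:ℕ):ℝ)/2 * 4^M := by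
        refine mul_le_mul (by linarith) hM1 (by positivity) (by positivity)

theorem small_n (n : ℕ) (hn : 0 < n) : ∃ (b : Fin n → EuclideanSpace ℝ (Fin n)) (R : ℝ), 0 < R ∧ IsLatticeCovering b R := by
  have hn' : (0:ℝ) < n := by exact_mod_cast hn
  refine ⟨fun i => EuclideanSpace.basisFun (Fin n) ℝ i, √n, Real.sqrt_pos.2 hn', ?_, ?_⟩
  · exact (EuclideanSpace.basisFun (Fin n) ℝ).toBasis.linearIndependent
  · rw [Set.eq_univ_iff_forall]
    intro x
    set y : EuclideanSpace ℝ (Fin n) := ∑ i, ((round (x i) : ℤ) : ℝ) • EuclideanSpace.basisFun (Fin n) ℝ i with hy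
    have hyi : ∀ i, y i = round (x i) := by
      intro i
      rw [hy]
      simp [Finset.sum_apply, Pi.single_apply]
    rw [Set.mem_add]
    refine ⟨y, ⟨fun i => round (x i), rfl⟩, x - y, ?_, by abel⟩
    rw [mem_closedBall_zero_iff, EuclideanSpace.norm_eq]
    apply Real.sqrt_le_sqrt
    calc ∑ i, ‖(x - y) i‖^2 ≤ ∑ i : Fin n, (1:ℝ)^2 := by
          refine sum_le_sum fun i _ => ?_
          refine pow_le_pow_left₀ (norm_nonneg _) ?_ 2
          have := abs_sub_round (x i)
          rw [PiLp.sub_apply, hyi, Real.norm_eq_abs]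
          linarith
      _ = n := by simp

end PartF5

/-- **Theorem 1.1.** There is a constant `C > 0` such that for every `n ≥ 2` there is a
lattice covering of `ℝⁿ` by balls of density at most `C · n · (ln n)^β`, where
`β = (1/2) log₂ (8πe/(3√3))`. -/
theorem new_upper_bound_for_lattice_covering :
    ∃ C : ℝ, 0 < C ∧ ∀ n : ℕ, 2 ≤ n →
      ∃ (b : Fin n → EuclideanSpace ℝ (Fin n)) (r : ℝ), 0 < r ∧
        IsLatticeCovering b r ∧
        coveringDensity b r ≤
          C * n * Real.log n ^
            (Real.logb 2 (8 * Real.pi * Real.exp 1 / (3 * Real.sqrt 3)) / 2) := by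
  set D : ℝ := 8 * Real.pi * Real.exp 1 / (3 * Real.sqrt 3) with hD
  set β : ℝ := Real.logb 2 D / 2 with hβ
  have hD1 : 1 ≤ D := by
    rw [hD, one_le_div (by positivity)]
    have h1 : √3 ≤ 2 := by rw [Real.sqrt_le_left (by norm_num)]; norm_num
    have h2 := Real.pi_gt_three
    have h3 := Real.add_one_le_exp (1:ℝ)
    nlinarith
  have hD0 : 0 < D := by linarith
  have hβ0 : 0 ≤ β := div_nonneg (Real.logb_nonneg (by norm_num) hD1) (by norm_num)
  have hDM : ∀ M : ℕ, D^M = ((4:ℝ)^M)^β := by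
    intro M
    have h4 : (4:ℝ)^β = D := by
      rw [show (4:ℝ) = 2^(2:ℝ) by norm_num, ← Real.rpow_mul (by norm_num), hβ,
        show 2 * (Real.logb 2 D / 2) = Real.logb 2 D by ring]
      exact Real.rpow_logb (by norm_num) (by norm_num) hD0
    rw [← h4, ← Real.rpow_natCast, ← Real.rpow_natCast, ← Real.rpow_mul (by norm_num),
      ← Real.rpow_mul (by norm_num), mul_comm]
  obtain ⟨n0, hlarge⟩ := large_n
  have hc : ∀ n : ℕ, ∃ c : ℝ, 0 ≤ c ∧ (2 ≤ n → ∃ (b : Fin n → EuclideanSpace ℝ (Fin n)) (r : ℝ), 0 < r ∧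
        IsLatticeCovering b r ∧ coveringDensity b r ≤ c * n * Real.log n ^ β) := by
    intro n
    by_cases hn : 2 ≤ n
    · obtain ⟨b, R, hR, hb⟩ := small_n n (by omega)
      have hl : 0 < Real.log n := Real.log_pos (by exact_mod_cast hn)
      have hn0 : (0:ℝ) < n := by exact_mod_cast (by omega : 0 < n)
      have hp : 0 < n * Real.log n ^ β := mul_pos hn0 (Real.rpow_pos_of_pos hl _)
      refine ⟨|coveringDensity b R| / (n * Real.log n ^ β), by positivity, fun _ => ⟨b, R, hR, hb, ?_⟩⟩
      rw [mul_assoc, div_mul_cancel₀ _ hp.ne']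
      exact le_abs_self _
    · exact ⟨0, le_rfl, fun h => absurd h hn⟩
  choose c hc0 hc1 using hc
  have hsum0 : 0 ≤ ∑ n ∈ Finset.range n0, c n := Finset.sum_nonneg fun n _ => hc0 n
  have h80 : (0:ℝ) < 80000^β := Real.rpow_pos_of_pos (by norm_num) _
  refine ⟨80000^β + ∑ n ∈ Finset.range n0, c n, by linarith, fun n hn => ?_⟩
  have hl : 0 < Real.log n := Real.log_pos (by exact_mod_cast hn)
  have hn0 : (0:ℝ) < n := by exact_mod_cast (by omega : 0 < n)
  have hlp : 0 < Real.log n ^ β := Real.rpow_pos_of_pos hl _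
  rcases lt_or_ge n n0 with h | h
  · obtain ⟨b, r, hr, hb, hd⟩ := hc1 n hn
    refine ⟨b, r, hr, hb, hd.trans ?_⟩
    have := Finset.single_le_sum (f := c) (fun i _ => hc0 i) (Finset.mem_range.2 h)
    gcongr
    linarith
  · obtain ⟨M, hM, b, r, hr, hb, hd⟩ := hlarge n h
    refine ⟨b, r, hr, hb, hd.trans ?_⟩
    have h1 : D^M ≤ 80000^β * Real.log n ^ β := by
      rw [hDM, ← Real.mul_rpow (by norm_num) hl.le]
      exact Real.rpow_le_rpow (by positivity) hM hβ0
    calc (n:ℝ) * D^M ≤ n * (80000^β * Real.log n ^ β) := by gcongr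
      _ = 80000^β * n * Real.log n ^ β := by ring
      _ ≤ _ := by gcongr; linarith

end
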